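/- Let n be odd, let q ≥ 2, and let 1 ≤ m ≤ n. Then for every choice of admissible parameters, cat(S^m × L^n_q) = n + 1, where S^m is the m-dimensional sphere. -/

import Mathlib

open scoped Topology

/-- The Lusternik–Schnirelmann category of a space (normalized so that contractible spaces
have category 0): the least `k` such that `X` admits an open cover by `k+1` sets, each of
which has nullhomotopic inclusion into `X` (i.e. is contractible in `X`). -/
noncomputable def lsCat (X : Type*) [TopologicalSpace X] : ℕ :=
  sInf {k : ℕ | ∃ U : Fin (k + 1) → Set X,
    (∀ i, IsOpen (U i)) ∧ (⋃ i, U i) = Set.univ ∧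
    ∀ i, ContinuousMap.Nullhomotopic
      (⟨Subtype.val, continuous_subtype_val⟩ : C(U i, X))}

/-- The orbit relation on the unit sphere of `ℂ^k` defining the lens space
`L^{2k-1}_p(ℓ₁,…,ℓ_k)`: a fixed generator of `ℤ/p` acts coordinatewise by
`z_j ↦ exp(2πiℓ_j/p) z_j`, and `m` ranges over the powers of this generator. -/
def lensRel (p k : ℕ) (ℓ : Fin k → ℤ) :
    Metric.sphere (0 : EuclideanSpace ℂ (Fin k)) 1 →
      Metric.sphere (0 : EuclideanSpace ℂ (Fin k)) 1 → Prop :=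
  fun x y => ∃ m : ℤ, ∀ j : Fin k,
    (y.1 j) = Complex.exp (2 * Real.pi * Complex.I * m * ℓ j / p) * (x.1 j)

/-- The lens space `L^{2k-1}_p(ℓ₁,…,ℓ_k)`: the orbit space of the free linear action of `ℤ/p`
on the unit sphere `S^{2k-1} ⊆ ℂ^k` determined by the parameters `ℓ`, with the quotient
topology. -/
noncomputable def LensSpace (p k : ℕ) (ℓ : Fin k → ℤ) : Type :=
  Quot (lensRel p k ℓ)

noncomputable instance (p k : ℕ) (ℓ : Fin k → ℤ) : TopologicalSpace (LensSpace p k ℓ) :=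
  inferInstanceAs (TopologicalSpace (Quot (lensRel p k ℓ)))

/-!
Two contractible open sets cover `S^m` and the `2k` sets where `z_j^q`, respectively `-z_j^q`,
avoids the nonpositive reals descend to contractible open sets covering the lens space. Their
products combine into `2k + 1` sets, contractible in the product because it is path connected.

For the lower bound, suppose that `2k` contractible open sets `U_i` cover `S^m × L`, and pull them
back to `S^m × S^{2k-1}`. Lifting the contractions of all but the last set gives locally constant
equivariant labels with values in `ℤ/q`. Contracting the last one gives an invariant map
`φ : (ℝ^{m+1} × ℂ^k) ∖ 0 → ℝ^{m+1}` which is the normalized projection near `S^m × 0`, is constant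
near `0 × S^{2k-1}`, and has all its zeros over the other `2k - 1` sets. On fine triangulations of
the join `S^m * S^{2k-1}`, cup the Sperner cocycle that detects the zeros of `φ` with `k - 1`
two-dimensional carry cocycles of `ℤ/q` and a one-dimensional class, all computed from the
labels. One set trivializes the one-dimensional class and each pair of the others one carry
cocycle, so the product vanishes. Equivariance, however, lets it be transgressed down the tower
`S^m ⊂ S^m * S^1 ⊂ ⋯ ⊂ S^m * S^{2k-1}`, circle by circle, to the value `1` given by Sperner's
lemma on `S^m`.
-/

/-! ### Ordered chains -/

/-- Ordered simplicial chains on a vertex set `E`. Vertices may be repeated, and the empty list is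
the simplex of dimension `-1`, so that the complex is augmented. -/
abbrev OrderedChain (R E : Type*) [Semiring R] : Type _ := List E →₀ R

namespace OrderedChain

open Finsupp (single supported)

variable {R : Type*} [CommRing R] {E E' E'' : Type*}

section Supported

variable {ι M : Type*} [AddCommGroup M] [Module R M]

lemma map_mem_of_mem_supported (f : (ι →₀ R) →ₗ[R] M) {S : Set ι} {Q : Submodule R M}
    (h : ∀ i ∈ S, f (single i 1) ∈ Q) {x : ι →₀ R} (hx : x ∈ supported R R S) : f x ∈ Q := by
  rw [Finsupp.supported_eq_span_single] at hx
  have hle : Submodule.span R ((fun i ↦ single i (1 : R)) '' S) ≤ Q.comap f :=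
    Submodule.span_le.2 (Set.image_subset_iff.2 h)
  exact hle hx

lemma eq_of_mem_supported {f g : (ι →₀ R) →ₗ[R] M} {S : Set ι}
    (h : ∀ i ∈ S, f (single i 1) = g (single i 1)) {x : ι →₀ R} (hx : x ∈ supported R R S) :
    f x = g x := by
  have hfg : (f - g) x ∈ (⊥ : Submodule R M) :=
    map_mem_of_mem_supported (f - g) (fun i hi ↦ by simp [h i hi]) hx
  simpa [sub_eq_zero] using hfg

lemma eq_zero_of_mem_supported {f : (ι →₀ R) →ₗ[R] M} {S : Set ι}
    (h : ∀ i ∈ S, f (single i 1) = 0) {x : ι →₀ R} (hx : x ∈ supported R R S) : f x = 0 :=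
  eq_of_mem_supported (g := 0) h hx

lemma ext_single {f g : (ι →₀ R) →ₗ[R] M} (h : ∀ i, f (single i 1) = g (single i 1)) :
    f = g :=
  LinearMap.ext fun _ ↦ eq_of_mem_supported (S := Set.univ) (fun i _ ↦ h i) (by simp)

end Supported

/-- The cone with apex `a`, prepending `a` to every simplex. -/
noncomputable def cone (a : E) : OrderedChain R E →ₗ[R] OrderedChain R E :=
  Finsupp.lmapDomain R R (List.cons a)

@[simp]
lemma cone_single (a : E) (l : List E) (r : R) : cone a (single l r) = single (a :: l) r := by
  simp [cone]

/-- The contraction `∑ i, (-1)^i w(p_i) [p_0, …, p̂_i, …, p_n]` of the simplex `[p_0, …, p_n]`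
against the weight `w`, as a linear function of `w`. -/
noncomputable def contractSimplex : List E → (E → R) →ₗ[R] OrderedChain R E
  | [] => 0
  | a :: l => (LinearMap.proj a).smulRight (single l 1) - cone a ∘ₗ contractSimplex l

/-- The contraction of chains against a weight on the vertices: the boundary formula in which the
removal of the vertex `p` is weighted by `w p`. -/
noncomputable def contract : (E → R) →ₗ[R] OrderedChain R E →ₗ[R] OrderedChain R E :=
  (Finsupp.linearCombination R contractSimplex).flip

@[simp]
lemma contract_nil (w : E → R) : contract w (single [] 1) = 0 := by
  simp [contract, contractSimplex]

@[simp]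
lemma contract_cons (w : E → R) (a : E) (l : List E) :
    contract w (single (a :: l) 1) = w a • single l 1 - cone a (contract w (single l 1)) := by
  simp [contract, contractSimplex]

@[simp]
lemma contract_cone (w : E → R) (a : E) (x : OrderedChain R E) :
    contract w (cone a x) = w a • x - cone a (contract w x) := by
  have h : contract w ∘ₗ cone a = w a • LinearMap.id - cone a ∘ₗ contract w :=
    ext_single fun l ↦ by simp
  exact LinearMap.congr_fun h x

lemma contract_contract_eq_neg (w w' : E → R) (x : OrderedChain R E) :
    contract w (contract w' x) = -contract w' (contract w x) := by
  have h : contract w ∘ₗ contract w' = -contract w' ∘ₗ contract w := by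
    refine ext_single fun l ↦ ?_
    induction l with
    | nil => simp
    | cons a l ih =>
      simp only [LinearMap.comp_apply, LinearMap.neg_apply] at ih
      simp only [LinearMap.comp_apply, LinearMap.neg_apply, contract_cons, contract_cone, map_sub,
        map_smul, map_neg, ih]
      abel
  exact LinearMap.congr_fun h x

lemma contract_contract (w : E → R) (x : OrderedChain R E) : contract w (contract w x) = 0 := by
  have h : contract w ∘ₗ contract w = 0 := by
    refine ext_single fun l ↦ ?_
    induction l with
    | nil => simp
    | cons a l ih =>
      simp only [LinearMap.comp_apply, LinearMap.zero_apply] at ih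
      simp only [LinearMap.comp_apply, LinearMap.zero_apply, contract_cons, contract_cone, map_sub,
        map_smul, ih, map_zero, sub_zero, sub_self]
  exact LinearMap.congr_fun h x

lemma contract_single_mem_supported (w : E → R) (l : List E) :
    contract w (single l 1) ∈ supported R R {l' | l'.Sublist l ∧ l'.length + 1 = l.length} := by
  induction l with
  | nil => simp
  | cons a l ih =>
    rw [contract_cons]
    refine sub_mem (Submodule.smul_mem _ _ (Finsupp.single_mem_supported R 1 ?_)) ?_
    · exact ⟨List.sublist_cons_self a l, rfl⟩
    · refine map_mem_of_mem_supported (cone a) (fun l' hl' ↦ ?_) ih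
      rw [cone_single]
      exact Finsupp.single_mem_supported R 1 ⟨hl'.1.cons_cons a, by simp [hl'.2]⟩

lemma contract_single_congr {w w' : E → R} {l : List E} (h : ∀ p ∈ l, w p = w' p) :
    contract w (single l 1) = contract w' (single l 1) := by
  induction l with
  | nil => simp
  | cons a l ih =>
    rw [contract_cons, contract_cons, ih fun p hp ↦ h p (List.mem_cons_of_mem a hp),
      h a List.mem_cons_self]

/-- The augmented boundary: the empty simplex is the boundary of every vertex. -/
noncomputable def boundary : OrderedChain R E →ₗ[R] OrderedChain R E := contract 1

@[simp]
lemma boundary_nil : boundary (single ([] : List E) (1 : R)) = 0 := contract_nil _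

@[simp]
lemma boundary_cons (a : E) (l : List E) :
    boundary (single (a :: l) (1 : R)) = single l 1 - cone a (boundary (single l 1)) := by
  simp [boundary]

@[simp]
lemma boundary_cone (a : E) (x : OrderedChain R E) :
    boundary (cone a x) = x - cone a (boundary x) := by
  simp [boundary]

@[simp]
lemma boundary_boundary (x : OrderedChain R E) : boundary (boundary x) = 0 :=
  contract_contract _ _

/-- The chain map induced by a map of vertices. -/
noncomputable def map (f : E → E') : OrderedChain R E →ₗ[R] OrderedChain R E' :=
  Finsupp.lmapDomain R R (List.map f)

@[simp]
lemma map_single (f : E → E') (l : List E) (r : R) :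
    map f (single l r) = single (l.map f) r := by
  simp [map]

@[simp]
lemma map_cone (f : E → E') (a : E) (x : OrderedChain R E) :
    map f (cone a x) = cone (f a) (map f x) := by
  have h : map f ∘ₗ cone a = cone (R := R) (f a) ∘ₗ map f := ext_single fun l ↦ by simp
  exact LinearMap.congr_fun h x

lemma contract_map (f : E → E') (w : E' → R) (x : OrderedChain R E) :
    contract w (map f x) = map f (contract (w ∘ f) x) := by
  have h : contract w ∘ₗ map f = map f ∘ₗ contract (w ∘ f) := by
    refine ext_single fun l ↦ ?_
    induction l with
    | nil => simp
    | cons a l ih =>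
      simp only [LinearMap.comp_apply, map_single] at ih
      simp [ih]
  exact LinearMap.congr_fun h x

lemma boundary_map (f : E → E') (x : OrderedChain R E) :
    boundary (map f x) = map f (boundary x) :=
  contract_map f 1 x

lemma map_map (g : E' → E'') (f : E → E') (x : OrderedChain R E) :
    map g (map f x) = map (g ∘ f) x := by
  have h : map (R := R) g ∘ₗ map f = map (g ∘ f) := ext_single fun l ↦ by simp
  exact LinearMap.congr_fun h x

/-- `joinRight y x` is the join `x * y`, the bilinear extension of concatenation of simplices. -/
noncomputable def joinRight (y : OrderedChain R E) : OrderedChain R E →ₗ[R] OrderedChain R E :=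
  Finsupp.linearCombination R fun l ↦ Finsupp.lmapDomain R R (l ++ ·) y

@[simp]
lemma joinRight_nil (y : OrderedChain R E) : joinRight y (single [] 1) = y := by
  simp only [joinRight, Finsupp.linearCombination_single, one_smul, List.nil_append,
    Finsupp.lmapDomain_apply]
  exact Finsupp.mapDomain_id

@[simp]
lemma joinRight_cons (y : OrderedChain R E) (a : E) (l : List E) :
    joinRight y (single (a :: l) 1) = cone a (joinRight y (single l 1)) := by
  simp only [joinRight, Finsupp.linearCombination_single, one_smul, cone,
    Finsupp.lmapDomain_apply, ← Finsupp.mapDomain_comp]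
  rfl

@[simp]
lemma joinRight_cone (y : OrderedChain R E) (a : E) (x : OrderedChain R E) :
    joinRight y (cone a x) = cone a (joinRight y x) := by
  have h : joinRight y ∘ₗ cone a = cone a ∘ₗ joinRight y := ext_single fun l ↦ by simp
  exact LinearMap.congr_fun h x

lemma boundary_joinRight {y : OrderedChain R E} (hy : boundary y = 0) (x : OrderedChain R E) :
    boundary (joinRight y x) = joinRight y (boundary x) := by
  have h : boundary ∘ₗ joinRight y = joinRight y ∘ₗ boundary := by
    refine ext_single fun l ↦ ?_
    induction l with
    | nil => simp [hy]
    | cons a l ih =>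
      simp only [LinearMap.comp_apply] at ih
      simp [ih]
  exact LinearMap.congr_fun h x

lemma map_joinRight (f : E → E') (y x : OrderedChain R E) :
    map f (joinRight y x) = joinRight (map f y) (map f x) := by
  have h : map f ∘ₗ joinRight y = joinRight (map f y) ∘ₗ map f := by
    refine ext_single fun l ↦ ?_
    induction l with
    | nil => simp
    | cons a l ih =>
      simp only [LinearMap.comp_apply, map_single] at ih
      simp [ih]
  exact LinearMap.congr_fun h x

lemma joinRight_mem_supported {x y : OrderedChain R E} {S T : Set (List E)}
    (hx : x ∈ supported R R S) (hy : y ∈ supported R R T) :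
    joinRight y x ∈ supported R R (Set.image2 (· ++ ·) S T) := by
  refine map_mem_of_mem_supported (joinRight y) (fun l hl ↦ ?_) hx
  simp only [joinRight, Finsupp.linearCombination_single, one_smul]
  refine map_mem_of_mem_supported (Finsupp.lmapDomain R R (l ++ ·)) (fun l' hl' ↦ ?_) hy
  simpa using Finsupp.single_mem_supported R (1 : R) (Set.mem_image2_of_mem hl hl')

end OrderedChain

/-! ### Label cocycles and cup products -/

/-- Ordered simplicial cochains on a vertex set `E` with coefficients in `R`. -/
abbrev OrderedCochain (R E : Type*) [CommRing R] : Type _ := OrderedChain R E →ₗ[R] R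

namespace OrderedCochain

open Finsupp (single supported)
open OrderedChain

variable {R : Type*} [CommRing R] {E E' : Type*}

/-- The simplicial coboundary, without the customary sign. -/
noncomputable def coboundary (φ : OrderedCochain R E) : OrderedCochain R E := φ ∘ₗ boundary

lemma coboundary_boundary (φ : OrderedCochain R E) (x : OrderedChain R E) :
    coboundary φ (boundary x) = 0 := by
  simp [coboundary]

/-- The cochain restricts to zero on the full simplex spanned by the vertices of `l`. -/
def VanishesOn (φ : OrderedCochain R E) (l : List E) : Prop :=
  ∀ l' : List E, l'.Sublist l → φ (single l' 1) = 0

namespace VanishesOn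

variable {φ : OrderedCochain R E} {l l' : List E}

lemma eq_zero (h : φ.VanishesOn l) : φ (single l 1) = 0 := h l (List.Sublist.refl l)

lemma mono (h : φ.VanishesOn l) (hl : l'.Sublist l) : φ.VanishesOn l' :=
  fun _ hs ↦ h _ (hs.trans hl)

lemma coboundary (h : φ.VanishesOn l) : (coboundary φ).VanishesOn l := fun l' hl' ↦
  eq_zero_of_mem_supported (fun l'' hl'' ↦ h l'' (hl''.1.trans hl'))
    (contract_single_mem_supported 1 l')

lemma map {g : E → E} (hg : ∀ x, φ (OrderedChain.map g x) = φ x) (h : φ.VanishesOn l) :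
    φ.VanishesOn (l.map g) := by
  intro l' hl'
  obtain ⟨l'', hl'', rfl⟩ := List.sublist_map_iff.1 hl'
  rw [← map_single, hg, h l'' hl'']

end VanishesOn

section Labels

variable (R) in
/-- The signed count of the simplices whose vertices carry the labels `0, …, r - 1`, each of them
exactly once. -/
noncomputable def labelCount (d : E → ℕ) : ℕ → OrderedCochain R E
  | 0 => Finsupp.lapply []
  | r + 1 => labelCount d r ∘ₗ contract ((d ⁻¹' {r}).indicator 1)

lemma labelCount_eq_zero_of_forall_ne {d : E → ℕ} {r j : ℕ} (hj : j < r) {l : List E}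
    (h : ∀ p ∈ l, d p ≠ j) : labelCount R d r (single l 1) = 0 := by
  induction r generalizing l with
  | zero => omega
  | succ r ih =>
    simp only [labelCount, LinearMap.comp_apply]
    obtain rfl | hjr := eq_or_ne j r
    · rw [contract_single_congr (w' := 0) fun p hp ↦ by simp [h p hp]]
      simp
    · exact eq_zero_of_mem_supported
        (fun l' hl' ↦ ih (by omega) fun p hp ↦ h p (hl'.1.subset hp))
        (contract_single_mem_supported _ l)

lemma labelCount_contract_indicator {d : E → ℕ} {r j : ℕ} (hj : j < r) (x : OrderedChain R E) :
    labelCount R d r (contract ((d ⁻¹' {j}).indicator 1) x) = 0 := by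
  induction r generalizing x with
  | zero => omega
  | succ r ih =>
    simp only [labelCount, LinearMap.comp_apply]
    obtain rfl | hjr := eq_or_ne j r
    · rw [contract_contract, map_zero]
    · rw [contract_contract_eq_neg, map_neg, ih (by omega), neg_zero]

lemma labelCount_boundary {d : E → ℕ} {r : ℕ} {l : List E} (h : ∀ p ∈ l, d p ≤ r) :
    labelCount R d r (boundary (single l 1)) = labelCount R d (r + 1) (single l 1) := by
  have hsum : boundary (single l (1 : R))
      = ∑ j ∈ Finset.range (r + 1), contract ((d ⁻¹' {j}).indicator 1) (single l 1) := by
    rw [← LinearMap.sum_apply, ← map_sum]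
    refine contract_single_congr fun p hp ↦ ?_
    simp [Finset.sum_apply, Set.indicator, Nat.lt_succ_of_le (h p hp)]
  rw [hsum, map_sum, Finset.sum_range_succ, Finset.sum_eq_zero, zero_add]
  · rfl
  · exact fun j hj ↦ labelCount_contract_indicator (Finset.mem_range.1 hj) _

lemma labelCount_map (f : E → E') (d : E' → ℕ) (r : ℕ) (x : OrderedChain R E) :
    labelCount R d r (map f x) = labelCount R (d ∘ f) r x := by
  induction r generalizing x with
  | zero =>
    have h : labelCount R d 0 ∘ₗ map f = labelCount R (d ∘ f) 0 := by
      refine ext_single fun l ↦ ?_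
      cases l <;> simp [labelCount]
    exact LinearMap.congr_fun h x
  | succ r ih =>
    simp only [labelCount, LinearMap.comp_apply]
    rw [contract_map, ih]
    rfl

variable (R) in
/-- The Sperner cocycle of a labelling by `0, …, r`, which counts fully labelled `r`-simplices. -/
noncomputable def labelCocycle (d : E → ℕ) (r : ℕ) : OrderedCochain R E :=
  coboundary (labelCount R d r)

lemma labelCocycle_map (f : E → E') (d : E' → ℕ) (r : ℕ) (x : OrderedChain R E) :
    labelCocycle R d r (map f x) = labelCocycle R (d ∘ f) r x := by
  simp only [labelCocycle, coboundary, LinearMap.comp_apply, boundary_map, labelCount_map]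

lemma labelCocycle_vanishesOn {d : E → ℕ} {r j : ℕ} (hd : ∀ p, d p ≤ r) (hj : j ≤ r)
    {l : List E} (h : ∀ p ∈ l, d p ≠ j) : (labelCocycle R d r).VanishesOn l := by
  intro l' hl'
  rw [labelCocycle, coboundary, LinearMap.comp_apply, labelCount_boundary fun p _ ↦ hd p]
  exact labelCount_eq_zero_of_forall_ne (Nat.lt_succ_of_le hj) fun p hp ↦ h p (hl'.subset hp)

end Labels

section Cup

variable (f : E → R) (g : E → E → R) {φ : OrderedCochain R E}

/-- The cup product `f ⌣ φ` with a `0`-cochain `f`. -/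
noncomputable def cupZero (φ : OrderedCochain R E) : OrderedCochain R E :=
  Finsupp.linearCombination R fun
    | [] => 0
    | p :: l => f p * φ (single (p :: l) 1)

/-- The cup product `g ⌣ φ` with a `1`-cochain `g`. -/
noncomputable def cupOne (φ : OrderedCochain R E) : OrderedCochain R E :=
  Finsupp.linearCombination R fun
    | [] => 0
    | [_] => 0
    | p :: p' :: l => g p p' * φ (single (p' :: l) 1)

@[simp]
lemma cupZero_nil : cupZero f φ (single [] 1) = 0 := by simp [cupZero]

@[simp]
lemma cupZero_cons (p : E) (l : List E) :
    cupZero f φ (single (p :: l) 1) = f p * φ (single (p :: l) 1) := by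
  simp [cupZero]

@[simp]
lemma cupOne_nil : cupOne g φ (single [] 1) = 0 := by simp [cupOne]

@[simp]
lemma cupOne_singleton (p : E) : cupOne g φ (single [p] 1) = 0 := by simp [cupOne]

@[simp]
lemma cupOne_cons_cons (p p' : E) (l : List E) :
    cupOne g φ (single (p :: p' :: l) 1) = g p p' * φ (single (p' :: l) 1) := by
  simp [cupOne]

@[simp]
lemma cupZero_cone (p : E) (x : OrderedChain R E) :
    cupZero f φ (cone p x) = f p * φ (cone p x) := by
  have h : cupZero f φ ∘ₗ cone p = f p • φ ∘ₗ cone p := ext_single fun l ↦ by simp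
  exact LinearMap.congr_fun h x

@[simp]
lemma cupOne_cone_cone (p p' : E) (x : OrderedChain R E) :
    cupOne g φ (cone p (cone p' x)) = g p p' * φ (cone p' x) := by
  have h : cupOne g φ ∘ₗ cone p ∘ₗ cone p' = g p p' • φ ∘ₗ cone p' := ext_single fun l ↦ by simp
  exact LinearMap.congr_fun h x

lemma cone_boundary_of_cocycle (hφ : ∀ x, φ (boundary x) = 0) (p : E) (l : List E) :
    φ (cone p (boundary (single l 1))) = φ (single l 1) := by
  have h := hφ (single (p :: l) 1)
  rw [boundary_cons, map_sub, sub_eq_zero] at h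
  exact h.symm

lemma coboundary_cupZero_cons_cons (hφ : ∀ x, φ (boundary x) = 0) (p p' : E) (l : List E) :
    coboundary (cupZero f φ) (single (p :: p' :: l) 1)
      = (f p' - f p) * φ (single (p' :: l) 1) := by
  rw [coboundary, LinearMap.comp_apply, boundary_cons, map_sub, cupZero_cons, cupZero_cone,
    cone_boundary_of_cocycle hφ]
  ring

lemma coboundary_cupZero_eq_zero (hφ : ∀ x, φ (boundary x) = 0) {l : List E} {c : R}
    (h : φ.VanishesOn l ∨ ∀ p ∈ l, f p = c) : coboundary (cupZero f φ) (single l 1) = 0 := by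
  obtain _ | ⟨p, _ | ⟨p', l⟩⟩ := l
  · simp [coboundary]
  · simp [coboundary]
  rw [coboundary_cupZero_cons_cons f hφ]
  obtain h | h := h
  · rw [h _ (List.sublist_cons_self p _), mul_zero]
  · rw [h p (by simp), h p' (by simp), sub_self, zero_mul]

lemma coboundary_cupOne_nil : coboundary (cupOne g φ) (single [] 1) = 0 := by
  simp [coboundary]

lemma coboundary_cupOne_singleton (p : E) : coboundary (cupOne g φ) (single [p] 1) = 0 := by
  simp [coboundary]

lemma coboundary_cupOne_pair (p p' : E) : coboundary (cupOne g φ) (single [p, p'] 1) = 0 := by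
  simp [coboundary]

lemma coboundary_cupOne_cons_cons_cons (hφ : ∀ x, φ (boundary x) = 0) (p p' p'' : E)
    (l : List E) :
    coboundary (cupOne g φ) (single (p :: p' :: p'' :: l) 1)
      = (g p' p'' - g p p'' + g p p') * φ (single (p'' :: l) 1) := by
  rw [coboundary, LinearMap.comp_apply, boundary_cons, map_sub, cupOne_cons_cons, boundary_cons,
    map_sub, cone_single, map_sub, cupOne_cons_cons, cupOne_cone_cone,
    cone_boundary_of_cocycle hφ]
  ring

lemma VanishesOn.cupOne {l : List E} (h : φ.VanishesOn l) : (cupOne g φ).VanishesOn l := by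
  rintro (_ | ⟨p, _ | ⟨p', l'⟩⟩) hl'
  · exact cupOne_nil g
  · exact cupOne_singleton g p
  · rw [cupOne_cons_cons, h _ ((List.sublist_cons_self p _).trans hl'), mul_zero]

lemma coboundary_cupZero_of_boundary_eq_sub (g : E → E) {x y : OrderedChain R E}
    (hy : boundary y = map g x - x)
    (hx : x ∈ supported R R {l | l ≠ [] ∧
      φ (single (l.map g) 1) = φ (single l 1) ∧
      (φ (single l 1) = 0 ∨ ∀ p ∈ l, f (g p) = f p + 1)}) :
    coboundary (cupZero f φ) y = φ x := by
  rw [coboundary, LinearMap.comp_apply, hy, map_sub]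
  refine eq_of_mem_supported (f := cupZero f φ ∘ₗ map g - cupZero f φ) ?_ hx
  rintro (_ | ⟨p, l⟩) ⟨hl, hinv, h⟩
  · exact absurd rfl hl
  · simp only [LinearMap.sub_apply, LinearMap.comp_apply, map_single, List.map_cons,
      cupZero_cons] at hinv ⊢
    rw [hinv]
    obtain h | h := h
    · rw [h]; ring
    · rw [h p List.mem_cons_self]; ring

end Cup

/-! ### Transgression along a cyclic group action -/

section Carry

variable {q : ℕ}

/-- The carry in the subtraction `b - a` of residues modulo `q`. -/
def carry (a b : ZMod q) : ℤ := if b.val < a.val then 1 else 0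

variable [NeZero q]

lemma mul_carry (a b : ZMod q) : (q : ℤ) * carry a b = (b - a).val - b.val + a.val := by
  have ha := ZMod.val_lt a
  have hba := ZMod.val_lt (b - a)
  unfold carry
  split_ifs with h
  · have hadd : ((b - a).val + a.val) % q = b.val := by rw [← ZMod.val_add, sub_add_cancel]
    have hle : q ≤ (b - a).val + a.val := by
      by_contra! hlt
      rw [Nat.mod_eq_of_lt hlt] at hadd
      omega
    rw [Nat.mod_eq_sub_mod hle, Nat.mod_eq_of_lt (by omega)] at hadd
    omega
  · rw [ZMod.val_sub (by omega)]
    omega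

lemma sum_carry_add_add (a b : ZMod q) :
    ((∑ c : ZMod q, carry (a + c) (b + c) : ℤ) : ZMod q) = b - a := by
  have hq : (q : ℤ) ≠ 0 := by exact_mod_cast NeZero.ne q
  have hsum (a : ZMod q) : ∑ c : ZMod q, ((a + c).val : ℤ) = ∑ c : ZMod q, (c.val : ℤ) :=
    Equiv.sum_comp (Equiv.addLeft a) fun c : ZMod q ↦ (c.val : ℤ)
  have h : (q : ℤ) * ∑ c : ZMod q, carry (a + c) (b + c) = q * ((b - a).val : ℤ) := by
    simp_rw [Finset.mul_sum, mul_carry, Finset.sum_add_distrib, Finset.sum_sub_distrib, hsum]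
    simp [ZMod.card]
  rw [mul_left_cancel₀ hq h]
  simp

lemma carry_add_add_alternating (a a' b b' c : ZMod q) :
    carry (a' + c) (b' + c) - carry (a + c) (b' + c) + carry (a + c) (b + c)
        - carry (a' + c) (b + c)
      = carry a' b' - carry a b' + carry a b - carry a' b := by
  have hq : (q : ℤ) ≠ 0 := by exact_mod_cast NeZero.ne q
  apply mul_left_cancel₀ hq
  simp only [mul_add, mul_sub, mul_carry, add_sub_add_right_eq_sub]
  ring

/-- For equivariant `s` and `t`, the coboundary of this `1`-cochain is an invariant `2`-cocycle
representing, up to sign, the Bockstein class of the quotient; this `2`-cocycle vanishes wherever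
`s` or `t` is constant. -/
def carryCochain (s t : E → ZMod q) (p p' : E) : ZMod q :=
  ((carry (s p) (t p') - carry (s p') (t p') : ℤ) : ZMod q)

end Carry

section Transgression

variable {q : ℕ} [NeZero q] {φ : OrderedCochain (ZMod q) E} {y z : OrderedChain (ZMod q) E}

lemma coboundary_cupOne_carryCochain_of_boundary_eq_sum (g : ZMod q → E → E)
    (hφ : ∀ x, φ (boundary x) = 0) {s t : E → ZMod q}
    (hz : boundary z = ∑ c, map (g c) y)
    (hy : y ∈ supported (ZMod q) (ZMod q) {l | 2 ≤ l.length ∧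
      (∀ c, φ (single (l.tail.map (g c)) 1) = φ (single l.tail 1)) ∧
      (φ (single l.tail 1) = 0 ∨ ∀ c, ∀ p ∈ l, s (g c p) = s p + c ∧ t (g c p) = t p + c)}) :
    coboundary (cupOne (carryCochain s t) φ) z = coboundary (cupZero s φ) y := by
  rw [coboundary, LinearMap.comp_apply, hz, map_sum]
  suffices h : (∑ c, cupOne (carryCochain s t) φ ∘ₗ map (g c)) y = coboundary (cupZero s φ) y by
    simpa [LinearMap.sum_apply] using h
  refine eq_of_mem_supported ?_ hy
  rintro (_ | ⟨p, _ | ⟨p', l⟩⟩) ⟨hl, hinv, h⟩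
  · simp at hl
  · simp at hl
  simp only [List.tail_cons, List.map_cons] at hinv h
  rw [coboundary_cupZero_cons_cons _ hφ]
  simp only [LinearMap.sum_apply, LinearMap.comp_apply, map_single, List.map_cons,
    cupOne_cons_cons, hinv, ← Finset.sum_mul]
  obtain h | h := h
  · rw [h, mul_zero, mul_zero]
  · congr 1
    have hp c := h c p List.mem_cons_self
    have hp' c := h c p' (List.mem_cons_of_mem _ List.mem_cons_self)
    simp only [carryCochain, hp, hp']
    rw [← Int.cast_sum, Finset.sum_sub_distrib, Int.cast_sub, sum_carry_add_add,
      sum_carry_add_add]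
    ring

end Transgression

section Iterated

variable {q : ℕ} (ψ : OrderedCochain (ZMod q) E) (t : ℕ → E → ZMod q)

/-- The cup product of `ψ` with `j` copies of the Bockstein class, the `i`-th of which is
represented by means of `t (2 * i)` and `t (2 * i + 1)`. -/
noncomputable def iteratedCocycle : ℕ → OrderedCochain (ZMod q) E
  | 0 => ψ
  | j + 1 => coboundary (cupOne (carryCochain (t (2 * j)) (t (2 * j + 1))) (iteratedCocycle j))

/-- The simplices on which the iterated cocycle is invariant: those on which `ψ` vanishes and those
in the region `D` on which the functions `t i` are equivariant. -/
def IsRegular (D : Set E) (l : List E) : Prop := ψ.VanishesOn l ∨ ∀ p ∈ l, p ∈ D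

/-- The simplices on which the product of `ψ` with `n` one-dimensional classes vanishes: those on
which `ψ` vanishes or one of the functions `t i` with `i < n` is constant. -/
def IsSmall (D : Set E) (n : ℕ) (l : List E) : Prop :=
  ψ.VanishesOn l ∨ (∀ p ∈ l, p ∈ D) ∧ ∃ i < n, ∃ c, ∀ p ∈ l, t i p = c

variable {ψ t} {D : Set E} {l l' : List E}

lemma IsSmall.isRegular {n : ℕ} (h : IsSmall ψ t D n l) : IsRegular ψ D l :=
  h.imp id And.left

lemma IsRegular.mono (h : IsRegular ψ D l) (hl : l'.Sublist l) : IsRegular ψ D l' :=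
  h.imp (fun h ↦ h.mono hl) fun h p hp ↦ h p (hl.subset hp)

lemma VanishesOn.iteratedCocycle (h : ψ.VanishesOn l) (j : ℕ) :
    (iteratedCocycle ψ t j).VanishesOn l := by
  induction j with
  | zero => exact h
  | succ j ih => exact (ih.cupOne _).coboundary

lemma iteratedCocycle_boundary (hψ : ∀ x, ψ (boundary x) = 0) (j : ℕ)
    (x : OrderedChain (ZMod q) E) : iteratedCocycle ψ t j (boundary x) = 0 := by
  cases j with
  | zero => exact hψ x
  | succ j => exact coboundary_boundary _ x

lemma coboundary_cupOne_carryCochain_eq_zero {φ : OrderedCochain (ZMod q) E}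
    (hφ : ∀ x, φ (boundary x) = 0) {s t : E → ZMod q} {c : ZMod q}
    (h : (∀ p ∈ l, s p = c) ∨ ∀ p ∈ l, t p = c) :
    coboundary (cupOne (carryCochain s t) φ) (single l 1) = 0 := by
  obtain _ | ⟨p, _ | ⟨p', _ | ⟨p'', l⟩⟩⟩ := l
  · exact coboundary_cupOne_nil _
  · exact coboundary_cupOne_singleton _ _
  · exact coboundary_cupOne_pair _ _ _
  rw [coboundary_cupOne_cons_cons_cons _ hφ]
  obtain h | h := h
  · simp [carryCochain, h p, h p', h p'']
  · simp only [carryCochain, h p' (by simp), h p'' (by simp)]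
    push_cast
    ring

lemma iteratedCocycle_vanishesOn (hψ : ∀ x, ψ (boundary x) = 0) {i j : ℕ} (hij : i < 2 * j)
    {c : ZMod q} (h : ∀ p ∈ l, t i p = c) : (iteratedCocycle ψ t j).VanishesOn l := by
  induction j with
  | zero => omega
  | succ j ih =>
    obtain hij' | hij' := lt_or_ge i (2 * j)
    · exact ((ih hij').cupOne _).coboundary
    · intro l' hl'
      obtain rfl | rfl : i = 2 * j ∨ i = 2 * j + 1 := by omega
      · exact coboundary_cupOne_carryCochain_eq_zero (iteratedCocycle_boundary hψ j)
          (.inl fun p hp ↦ h p (hl'.subset hp))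
      · exact coboundary_cupOne_carryCochain_eq_zero (iteratedCocycle_boundary hψ j)
          (.inr fun p hp ↦ h p (hl'.subset hp))

lemma IsSmall.coboundary_cupZero_iteratedCocycle_eq_zero (hψ : ∀ x, ψ (boundary x) = 0) {K : ℕ}
    (hl : IsSmall ψ t D (2 * K + 1) l) :
    coboundary (cupZero (t (2 * K)) (iteratedCocycle ψ t K)) (single l 1) = 0 := by
  have hcocycle := iteratedCocycle_boundary (t := t) hψ K
  obtain h | ⟨-, i, hi, c, h⟩ := hl
  · exact coboundary_cupZero_eq_zero (c := 0) _ hcocycle (.inl (h.iteratedCocycle K))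
  · obtain rfl | hi := eq_or_lt_of_le (Nat.le_of_lt_succ hi)
    · exact coboundary_cupZero_eq_zero _ hcocycle (.inr h)
    · exact coboundary_cupZero_eq_zero (c := c) _ hcocycle
        (.inl (iteratedCocycle_vanishesOn hψ hi h))

lemma IsRegular.vanishesOn_or_equivariant {g : ZMod q → E → E}
    (ht : ∀ i c, ∀ p ∈ D, t i (g c p) = t i p + c) (hl : IsRegular ψ D l) (j : ℕ) :
    (iteratedCocycle ψ t j).VanishesOn l ∨ ∀ i c, ∀ p ∈ l, t i (g c p) = t i p + c :=
  hl.imp (·.iteratedCocycle j) fun h i c p hp ↦ ht i c p (h p hp)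

section Equivariant

variable [NeZero q] (hψ : ∀ x, ψ (boundary x) = 0) {g : ZMod q → E → E}
  (hψg : ∀ c x, ψ (map (g c) x) = ψ x) (ht : ∀ i c, ∀ p ∈ D, t i (g c p) = t i p + c)

include hψ hψg ht

lemma iteratedCocycle_map_of_forall_mem (hl : ∀ p ∈ l, p ∈ D) (c : ZMod q) (j : ℕ) :
    iteratedCocycle ψ t j (single (l.map (g c)) 1) = iteratedCocycle ψ t j (single l 1) := by
  induction j generalizing l with
  | zero => exact (congrArg ψ (map_single (g c) l 1)).symm.trans (hψg c (single l 1))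
  | succ j ih =>
    have hcocycle := iteratedCocycle_boundary (t := t) hψ j
    obtain _ | ⟨p, _ | ⟨p', _ | ⟨p'', l⟩⟩⟩ := l
    · rfl
    · exact (coboundary_cupOne_singleton _ _).trans (coboundary_cupOne_singleton _ _).symm
    · exact (coboundary_cupOne_pair _ _ _).trans (coboundary_cupOne_pair _ _ _).symm
    have htail := ih (l := p'' :: l) fun x hx ↦ hl x (by simp_all)
    rw [List.map_cons] at htail
    rw [iteratedCocycle, List.map_cons, List.map_cons, List.map_cons,
      coboundary_cupOne_cons_cons_cons _ hcocycle, coboundary_cupOne_cons_cons_cons _ hcocycle,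
      htail]
    congr 1
    have hp i := ht i c p (hl p (by simp))
    have hp' i := ht i c p' (hl p' (by simp))
    have hp'' i := ht i c p'' (hl p'' (by simp))
    have hcarry := congrArg (Int.cast : ℤ → ZMod q) (carry_add_add_alternating
      (t (2 * j) p) (t (2 * j) p') (t (2 * j + 1) p') (t (2 * j + 1) p'') c)
    simp only [carryCochain, hp, hp', hp'']
    push_cast at hcarry ⊢
    linear_combination hcarry

lemma IsRegular.iteratedCocycle_map (hl : IsRegular ψ D l) (c : ZMod q) (j : ℕ) :
    iteratedCocycle ψ t j (single (l.map (g c)) 1) = iteratedCocycle ψ t j (single l 1) := by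
  obtain h | h := hl
  · rw [(h.iteratedCocycle j).eq_zero, ((h.map (hψg c)).iteratedCocycle j).eq_zero]
  · exact iteratedCocycle_map_of_forall_mem hψ hψg ht h c j

variable {x y z : OrderedChain (ZMod q) E}

lemma coboundary_cupZero_iteratedCocycle
    (hx : x ∈ supported (ZMod q) (ZMod q) {l | IsRegular ψ D l ∧ 2 ≤ l.length})
    (hxy : boundary y = map (g 1) x - x) (i j : ℕ) :
    coboundary (cupZero (t i) (iteratedCocycle ψ t j)) y = iteratedCocycle ψ t j x := by
  refine coboundary_cupZero_of_boundary_eq_sub _ _ hxy (Finsupp.supported_mono ?_ hx)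
  rintro l ⟨hl, hlen⟩
  exact ⟨List.ne_nil_of_length_pos (by omega), hl.iteratedCocycle_map hψ hψg ht 1 j,
    (hl.vanishesOn_or_equivariant ht j).imp (·.eq_zero) fun h ↦ h i 1⟩

lemma iteratedCocycle_succ_of_boundary_eq {j : ℕ}
    (hx : x ∈ supported (ZMod q) (ZMod q) {l | IsRegular ψ D l ∧ 2 ≤ l.length})
    (hy : y ∈ supported (ZMod q) (ZMod q) {l | IsRegular ψ D l ∧ 2 ≤ l.length})
    (hxy : boundary y = map (g 1) x - x) (hyz : boundary z = ∑ c, map (g c) y) :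
    iteratedCocycle ψ t (j + 1) z = iteratedCocycle ψ t j x := by
  rw [← coboundary_cupZero_iteratedCocycle hψ hψg ht hx hxy (2 * j) j]
  refine coboundary_cupOne_carryCochain_of_boundary_eq_sum g (iteratedCocycle_boundary hψ j) hyz
    (Finsupp.supported_mono ?_ hy)
  rintro l ⟨hl, hlen⟩
  exact ⟨hlen, fun c ↦ (hl.mono (List.tail_sublist l)).iteratedCocycle_map hψ hψg ht c j,
    (hl.vanishesOn_or_equivariant ht j).imp (fun h ↦ h _ (List.tail_sublist l))
      fun h c p hp ↦ ⟨h _ c p hp, h _ c p hp⟩⟩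

theorem eq_zero_of_tower {K : ℕ} {x y : ℕ → OrderedChain (ZMod q) E}
    (hx : ∀ j ≤ K, x j ∈ supported (ZMod q) (ZMod q)
      {l | IsSmall ψ t D (2 * K + 1) l ∧ 2 ≤ l.length})
    (hy : ∀ j ≤ K, y j ∈ supported (ZMod q) (ZMod q)
      {l | IsSmall ψ t D (2 * K + 1) l ∧ 2 ≤ l.length})
    (hxy : ∀ j ≤ K, boundary (y j) = map (g 1) (x j) - x j)
    (hyx : ∀ j < K, boundary (x (j + 1)) = ∑ c, map (g c) (y j)) :
    ψ (x 0) = 0 := by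
  have hsmall : {l | IsSmall ψ t D (2 * K + 1) l ∧ 2 ≤ l.length}
      ⊆ {l | IsRegular ψ D l ∧ 2 ≤ l.length} := fun l hl ↦ ⟨hl.1.isRegular, hl.2⟩
  have hx' j hj := Finsupp.supported_mono hsmall (hx j hj)
  have hy' j hj := Finsupp.supported_mono hsmall (hy j hj)
  have htelescope : ∀ j ≤ K, iteratedCocycle ψ t j (x j) = ψ (x 0) := by
    intro j hj
    induction j with
    | zero => rfl
    | succ j ih =>
      rw [← ih (by omega)]
      exact iteratedCocycle_succ_of_boundary_eq hψ hψg ht (hx' j (by omega)) (hy' j (by omega))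
        (hxy j (by omega)) (hyx j hj)
  rw [← htelescope K le_rfl,
    ← coboundary_cupZero_iteratedCocycle hψ hψg ht (hx' K le_rfl) (hxy K le_rfl) (2 * K) K]
  refine eq_zero_of_mem_supported ?_ (hy K le_rfl)
  exact fun l hl ↦ hl.1.coboundary_cupZero_iteratedCocycle_eq_zero hψ

end Equivariant

end Iterated

end OrderedCochain

/-! ### Barycentric subdivision -/

namespace OrderedChain

open Finsupp (single supported)

section Hull

variable {E : Type*} [AddCommGroup E] [Module ℝ E] {l l' : List E}

/-- The geometric simplex spanned by a list of points. -/
def hull (l : List E) : Set E := convexHull ℝ {p | p ∈ l}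

lemma mem_hull_of_mem {p : E} (hp : p ∈ l) : p ∈ hull l := subset_convexHull ℝ _ hp

lemma hull_subset {C : Set E} (hC : Convex ℝ C) (h : ∀ p ∈ l, p ∈ C) : hull l ⊆ C :=
  convexHull_min h hC

lemma hull_mono (h : l' ⊆ l) : hull l' ⊆ hull l := convexHull_mono h

/-- The barycenter of a list of points. -/
noncomputable def barycenter (l : List E) : E := (l.length : ℝ)⁻¹ • l.sum

lemma barycenter_map {E' : Type*} [AddCommGroup E'] [Module ℝ E'] (f : E →ₗ[ℝ] E')
    (l : List E) : barycenter (l.map f) = f (barycenter l) := by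
  simp [barycenter, map_list_sum]

lemma barycenter_mem_hull (hl : l ≠ []) : barycenter l ∈ hull l := by
  have hpos := List.length_pos_of_ne_nil hl
  have hmem := (convex_convexHull ℝ {p | p ∈ l}).sum_mem (t := Finset.univ)
    (w := fun _ : Fin l.length ↦ (l.length : ℝ)⁻¹) (z := l.get) (fun _ _ ↦ by positivity)
    (by simp; field_simp) fun i _ ↦ mem_hull_of_mem (List.get_mem l i)
  rwa [← Finset.smul_sum, ← List.sum_ofFn, List.ofFn_get] at hmem

end Hull

section Subdivide

variable {R : Type*} [CommRing R] {E E' : Type*} [AddCommGroup E] [Module ℝ E] [AddCommGroup E']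
  [Module ℝ E']

variable (R) in
/-- The barycentric subdivision of a simplex with `n` vertices: the cone from its barycenter over
the subdivision of its boundary. -/
noncomputable def subdivideSimplex : ℕ → List E → OrderedChain R E
  | 0, l => single l 1
  | n + 1, l => cone (barycenter l)
      (Finsupp.linearCombination R (subdivideSimplex n) (boundary (single l 1)))

variable (R E) in
/-- Barycentric subdivision of chains. -/
noncomputable def subdivide : Module.End R (OrderedChain R E) :=
  Finsupp.linearCombination R fun l ↦ subdivideSimplex R l.length l

@[simp]
lemma subdivide_nil : subdivide R E (single [] 1) = single [] 1 := by
  simp [subdivide, subdivideSimplex]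

lemma subdivide_single {l : List E} (hl : l ≠ []) :
    subdivide R E (single l 1)
      = cone (barycenter l) (subdivide R E (boundary (single l 1))) := by
  obtain ⟨n, hn⟩ := Nat.exists_eq_succ_of_ne_zero (List.length_pos_of_ne_nil hl).ne'
  have h : subdivide R E (single l 1) = subdivideSimplex R l.length l := by simp [subdivide]
  rw [h, hn, subdivideSimplex]
  congr 1
  refine eq_of_mem_supported (fun l' hl' ↦ ?_) (contract_single_mem_supported 1 l)
  obtain rfl : l'.length = n := by have := hl'.2; omega
  simp [subdivide]

lemma boundary_subdivide (x : OrderedChain R E) :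
    boundary (subdivide R E x) = subdivide R E (boundary x) := by
  suffices h : boundary ∘ₗ subdivide R E = subdivide R E ∘ₗ boundary from LinearMap.congr_fun h x
  refine ext_single fun l ↦ ?_
  induction hn : l.length generalizing l with
  | zero =>
    obtain rfl := List.length_eq_zero_iff.1 hn
    simp
  | succ n ih =>
    have hl : l ≠ [] := List.ne_nil_of_length_eq_add_one hn
    have hboundary : boundary (subdivide R E (boundary (single l 1))) = 0 := by
      have := eq_of_mem_supported (f := boundary ∘ₗ subdivide R E) (g := subdivide R E ∘ₗ boundary)
        (fun l' hl' ↦ ih l' (by have := hl'.2; omega))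
        (x := boundary (single l 1)) (contract_single_mem_supported 1 l)
      rwa [LinearMap.comp_apply, LinearMap.comp_apply, boundary_boundary, map_zero] at this
    rw [LinearMap.comp_apply, LinearMap.comp_apply, subdivide_single hl, boundary_cone, hboundary,
      map_zero, sub_zero]

lemma subdivide_map (f : E →ₗ[ℝ] E') (x : OrderedChain R E) :
    subdivide R E' (map f x) = map f (subdivide R E x) := by
  suffices h : subdivide R E' ∘ₗ map f = map f ∘ₗ subdivide R E from LinearMap.congr_fun h x
  refine ext_single fun l ↦ ?_
  induction hn : l.length generalizing l with
  | zero =>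
    obtain rfl := List.length_eq_zero_iff.1 hn
    simp
  | succ n ih =>
    have hl : l ≠ [] := List.ne_nil_of_length_eq_add_one hn
    rw [LinearMap.comp_apply, LinearMap.comp_apply, map_single,
      subdivide_single (mt List.map_eq_nil_iff.1 hl), subdivide_single hl, map_cone,
      barycenter_map, ← map_single, boundary_map]
    congr 1
    exact eq_of_mem_supported (f := subdivide R E' ∘ₗ map f) (g := map f ∘ₗ subdivide R E)
      (fun l' hl' ↦ ih l' (by have := hl'.2; omega)) (contract_single_mem_supported 1 l)

lemma subdivide_pow_nil (N : ℕ) : (subdivide R E ^ N) (single [] 1) = single [] 1 := by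
  rw [Module.End.pow_apply]
  exact Function.iterate_fixed subdivide_nil N

lemma boundary_subdivide_pow (N : ℕ) (x : OrderedChain R E) :
    boundary ((subdivide R E ^ N) x) = (subdivide R E ^ N) (boundary x) := by
  simp only [Module.End.pow_apply]
  exact Function.Commute.iterate_right (f := boundary) boundary_subdivide N x

lemma subdivide_pow_map (N : ℕ) (f : E →ₗ[ℝ] E') (x : OrderedChain R E) :
    (subdivide R E' ^ N) (map f x) = map f ((subdivide R E ^ N) x) := by
  simp only [Module.End.pow_apply]
  exact (Function.Semiconj.iterate_right (f := map f) (fun y ↦ (subdivide_map f y).symm) N x).symm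

end Subdivide

section Refinement

variable {R : Type*} [CommRing R] {E : Type*} [NormedAddCommGroup E] [NormedSpace ℝ E]
  {l l' l'' : List E} {ρ ρ' : ℝ}

omit [NormedSpace ℝ E] in
lemma dist_le_diam {p p' : E} (hp : p ∈ l) (hp' : p' ∈ l) :
    dist p p' ≤ Metric.diam {p | p ∈ l} :=
  Metric.dist_le_diam_of_mem (List.finite_toSet l).isBounded hp hp'

lemma dist_barycenter_le {p : E} (hp : p ∈ l) :
    dist p (barycenter l) ≤ (1 - (l.length : ℝ)⁻¹) * Metric.diam {p | p ∈ l} := by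
  obtain ⟨i, rfl⟩ := List.get_of_mem hp
  have hpos : 0 < l.length := List.length_pos_of_mem hp
  have hpos' : (0 : ℝ) < l.length := mod_cast hpos
  have hsub : l.get i - barycenter l
      = (l.length : ℝ)⁻¹ • ∑ j ∈ Finset.univ.erase i, (l.get i - l.get j) := by
    rw [Finset.sum_erase _ (sub_self _), Finset.sum_sub_distrib, ← List.sum_ofFn (f := l.get),
      List.ofFn_get, Finset.sum_const, Finset.card_univ, Fintype.card_fin, smul_sub,
      ← Nat.cast_smul_eq_nsmul ℝ, inv_smul_smul₀ hpos'.ne', barycenter]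
  have hsum : ‖∑ j ∈ Finset.univ.erase i, (l.get i - l.get j)‖
      ≤ (l.length - 1) * Metric.diam {p | p ∈ l} := by
    refine (norm_sum_le_of_le _ fun j _ ↦ ?_).trans_eq
      (b := ∑ _j ∈ Finset.univ.erase i, Metric.diam {p | p ∈ l}) ?_
    · rw [← dist_eq_norm]
      exact dist_le_diam (List.get_mem l i) (List.get_mem l j)
    · simp [Nat.cast_sub (Nat.one_le_iff_ne_zero.2 hpos.ne')]
  calc dist (l.get i) (barycenter l)
      = (l.length : ℝ)⁻¹ * ‖∑ j ∈ Finset.univ.erase i, (l.get i - l.get j)‖ := by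
        rw [dist_eq_norm, hsub, norm_smul, norm_inv, Real.norm_natCast]
    _ ≤ (l.length : ℝ)⁻¹ * ((l.length - 1) * Metric.diam {p | p ∈ l}) := by gcongr
    _ = (1 - (l.length : ℝ)⁻¹) * Metric.diam {p | p ∈ l} := by field_simp

/-- `l'` spans a simplex of the same dimension inside the simplex spanned by `l`, whose diameter is
smaller by a factor `ρ`. -/
structure IsRefinement (ρ : ℝ) (l l' : List E) : Prop where
  length_eq : l'.length = l.length
  subset_hull : ∀ p ∈ l', p ∈ hull l
  diam_le : Metric.diam {p | p ∈ l'} ≤ ρ * Metric.diam {p | p ∈ l}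

lemma IsRefinement.refl (l : List E) : IsRefinement 1 l l :=
  ⟨rfl, fun _ ↦ mem_hull_of_mem, (one_mul _).ge⟩

lemma IsRefinement.trans (hρ' : 0 ≤ ρ') (h : IsRefinement ρ l l')
    (h' : IsRefinement ρ' l' l'') : IsRefinement (ρ' * ρ) l l'' where
  length_eq := h'.length_eq.trans h.length_eq
  subset_hull p hp := hull_subset (convex_convexHull ℝ _) h.subset_hull (h'.subset_hull p hp)
  diam_le := h'.diam_le.trans <| by
    rw [mul_assoc]
    exact mul_le_mul_of_nonneg_left h.diam_le hρ'

lemma IsRefinement.cons_barycenter (hl' : l'.Sublist l) (hlen : l'.length + 1 = l.length)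
    (h : IsRefinement (1 - (l'.length : ℝ)⁻¹) l' l'') :
    IsRefinement (1 - (l.length : ℝ)⁻¹) l (barycenter l :: l'') := by
  set ρ : ℝ := 1 - (l.length : ℝ)⁻¹
  have hl : l ≠ [] := List.ne_nil_of_length_eq_add_one hlen.symm
  have hρ : 0 ≤ ρ :=
    sub_nonneg.2 (inv_le_one_of_one_le₀ (mod_cast List.length_pos_of_ne_nil hl))
  have hbary : ∀ p ∈ l'', dist p (barycenter l) ≤ ρ * Metric.diam {p | p ∈ l} := fun p hp ↦
    hull_subset (convex_closedBall (barycenter l) _)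
      (fun v hv ↦ dist_barycenter_le (hl'.subset hv)) (h.subset_hull p hp)
  have hface : ∀ p ∈ l'', ∀ p' ∈ l'', dist p p' ≤ ρ * Metric.diam {p | p ∈ l} := by
    intro p hp p' hp'
    have hpos : 0 < l'.length := h.length_eq ▸ List.length_pos_of_mem hp
    calc dist p p' ≤ (1 - (l'.length : ℝ)⁻¹) * Metric.diam {p | p ∈ l'} :=
          (dist_le_diam hp hp').trans h.diam_le
      _ ≤ ρ * Metric.diam {p | p ∈ l} := by
          refine mul_le_mul ?_ (Metric.diam_mono hl'.subset (List.finite_toSet l).isBounded)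
            Metric.diam_nonneg hρ
          simp only [ρ, ← hlen]
          gcongr
          omega
  refine ⟨by simp [h.length_eq, hlen], ?_, ?_⟩
  · rintro p (_ | ⟨_, hp⟩)
    · exact barycenter_mem_hull hl
    · exact hull_mono hl'.subset (h.subset_hull p hp)
  · refine Metric.diam_le_of_forall_dist_le (mul_nonneg hρ Metric.diam_nonneg) ?_
    rintro p (_ | ⟨_, hp⟩) p' (_ | ⟨_, hp'⟩)
    · simpa using mul_nonneg hρ Metric.diam_nonneg
    · exact dist_comm p' _ ▸ hbary p' hp'
    · exact hbary p hp
    · exact hface p hp p' hp'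

lemma subdivide_single_mem_supported (l : List E) :
    subdivide R E (single l 1)
      ∈ supported R R {l' | IsRefinement (1 - (l.length : ℝ)⁻¹) l l'} := by
  induction hn : l.length generalizing l with
  | zero =>
    obtain rfl := List.length_eq_zero_iff.1 hn
    rw [subdivide_nil]
    exact Finsupp.single_mem_supported R 1 ⟨rfl, by simp, by simp⟩
  | succ n ih =>
    rw [subdivide_single (List.ne_nil_of_length_eq_add_one hn), ← hn]
    refine map_mem_of_mem_supported (cone _ ∘ₗ subdivide R E) (fun l' hl' ↦ ?_)
      (contract_single_mem_supported 1 l)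
    have hlen : l'.length = n := by have := hl'.2; omega
    refine map_mem_of_mem_supported (cone _) (fun l'' hl'' ↦ ?_) (ih l' hlen)
    rw [cone_single]
    exact Finsupp.single_mem_supported R 1
      (IsRefinement.cons_barycenter hl'.1 hl'.2 (hlen ▸ hl''))

lemma subdivide_pow_single_mem_supported (N : ℕ) {l : List E} (hl : l ≠ []) :
    (subdivide R E ^ N) (single l 1)
      ∈ supported R R {l' | IsRefinement ((1 - (l.length : ℝ)⁻¹) ^ N) l l'} := by
  have hρ : 0 ≤ 1 - (l.length : ℝ)⁻¹ :=
    sub_nonneg.2 (inv_le_one_of_one_le₀ (mod_cast List.length_pos_of_ne_nil hl))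
  induction N with
  | zero => exact Finsupp.single_mem_supported R 1 (by simpa using IsRefinement.refl l)
  | succ N ih =>
    rw [pow_succ' (subdivide R E), Module.End.mul_apply]
    refine map_mem_of_mem_supported (subdivide R E) (fun l' hl' ↦ ?_) ih
    refine Finsupp.supported_mono (fun l'' hl'' ↦ ?_) (subdivide_single_mem_supported l')
    rw [Set.mem_ofPred, hl'.length_eq] at hl''
    exact pow_succ' (1 - (l.length : ℝ)⁻¹) N ▸ hl'.trans hρ hl''

lemma subdivide_pow_single_mem_supported_hull (N : ℕ) (l : List E) :
    (subdivide R E ^ N) (single l 1) ∈ supported R R {l' | ∀ p ∈ l', p ∈ hull l} := by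
  obtain rfl | hl := eq_or_ne l []
  · rw [subdivide_pow_nil]
    exact Finsupp.single_mem_supported R 1 (by simp)
  · exact Finsupp.supported_mono (fun _ ↦ IsRefinement.subset_hull)
      (subdivide_pow_single_mem_supported N hl)

theorem exists_subdivide_pow_mem_supported {S : Set (List E)} (hS : S.Finite)
    (hne : ∀ l ∈ S, l ≠ []) {𝒲 : Set (Set E)}
    (h𝒲 : ∀ l ∈ S, ∀ p ∈ hull l, ∃ W ∈ 𝒲, W ∈ 𝓝 p) :
    ∃ N, ∀ l ∈ S, (subdivide R E ^ N) (single l 1)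
      ∈ supported R R {l' | l'.length = l.length ∧ ∃ W ∈ 𝒲, ∀ p ∈ l', p ∈ W} := by
  have hcompact : IsCompact (⋃ l ∈ S, hull l) :=
    hS.isCompact_biUnion fun l _ ↦ (List.finite_toSet l).isCompact_convexHull (𝕜 := ℝ)
  obtain ⟨δ, hδ, hlebesgue⟩ := lebesgue_number_lemma_of_metric_sUnion
    (c := interior '' 𝒲) hcompact (by rintro _ ⟨W, -, rfl⟩; exact isOpen_interior) fun p hp ↦ by
      obtain ⟨l, hl, hp⟩ := Set.mem_iUnion₂.1 hp
      obtain ⟨W, hW, hWp⟩ := h𝒲 l hl p hp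
      exact ⟨_, ⟨W, hW, rfl⟩, mem_interior_iff_mem_nhds.2 hWp⟩
  have hsmall : ∀ l ∈ S, ∀ᶠ N : ℕ in Filter.atTop,
      (1 - (l.length : ℝ)⁻¹) ^ N * Metric.diam {p | p ∈ l} < δ := by
    intro l hl
    have hpos : (1 : ℝ) ≤ l.length := mod_cast List.length_pos_of_ne_nil (hne l hl)
    have htendsto := (tendsto_pow_atTop_nhds_zero_of_lt_one
      (sub_nonneg.2 (inv_le_one_of_one_le₀ hpos)) (sub_lt_self 1 (by positivity))).mul_const
        (Metric.diam {p | p ∈ l})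
    rw [zero_mul] at htendsto
    exact htendsto.eventually_lt_const hδ
  obtain ⟨N, hN⟩ := ((Filter.eventually_all_finite hS).2 hsmall).exists
  refine ⟨N, fun l hl ↦ Finsupp.supported_mono (fun l' hl' ↦ ?_)
    (subdivide_pow_single_mem_supported N (hne l hl))⟩
  refine ⟨hl'.length_eq, ?_⟩
  obtain ⟨v, hv⟩ := List.exists_mem_of_ne_nil l' <| by
    rintro rfl
    exact hne l hl (List.length_eq_zero_iff.1 hl'.length_eq.symm)
  obtain ⟨_, ⟨W, hW, rfl⟩, hball⟩ :=
    hlebesgue v (Set.mem_biUnion hl (hl'.subset_hull v hv))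
  exact ⟨W, hW, fun p hp ↦ interior_subset (hball
    (((dist_le_diam hp hv).trans hl'.diam_le).trans_lt (hN l hl)))⟩

theorem exists_forall_subdivide_pow_mem_supported {X : Set (OrderedChain R E)} (hX : X.Finite)
    {S : Set (List E)} (hXS : ∀ x ∈ X, x ∈ supported R R S) (hne : ∀ l ∈ S, l ≠ [])
    {𝒲 : Set (Set E)} (h𝒲 : ∀ l ∈ S, ∀ p ∈ hull l, ∃ W ∈ 𝒲, W ∈ 𝓝 p) :
    ∃ N, ∀ x ∈ X, (subdivide R E ^ N) x ∈ supported R R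
      {l' | (∃ l ∈ S, l'.length = l.length) ∧ ∃ W ∈ 𝒲, ∀ p ∈ l', p ∈ W} := by
  have hsub : ∀ x ∈ X, ∀ l ∈ (x.support : Set (List E)), l ∈ S := hXS
  obtain ⟨N, hN⟩ := exists_subdivide_pow_mem_supported (R := R)
    (S := ⋃ x ∈ X, (x.support : Set (List E))) (hX.biUnion fun x _ ↦ x.support.finite_toSet)
    (fun l hl ↦ by
      obtain ⟨x, hx, hl⟩ := Set.mem_iUnion₂.1 hl
      exact hne l (hsub x hx l hl))
    (𝒲 := 𝒲) (fun l hl ↦ by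
      obtain ⟨x, hx, hl⟩ := Set.mem_iUnion₂.1 hl
      exact h𝒲 l (hsub x hx l hl))
  refine ⟨N, fun x hx ↦ map_mem_of_mem_supported _ (fun l hl ↦ ?_)
    (Finsupp.mem_supported_support R x)⟩
  refine Finsupp.supported_mono ?_ (hN l (Set.mem_biUnion hx hl))
  exact fun l' hl' ↦ ⟨⟨l, hsub x hx l hl, hl'.1⟩, hl'.2⟩

end Refinement

end OrderedChain

/-! ### Iterated joins with circles -/

namespace OrderedChain

open Finsupp (single supported)

section JoinTower

variable {R : Type*} [CommRing R] {q : ℕ} {E : Type*} (g : ZMod q → E → E) (v w : ℕ → E)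

variable (R) in
/-- The path `v j → w j → g 1 (v j)`, a fundamental domain of the `j`-th circle. -/
noncomputable def arc (j : ℕ) : OrderedChain R E :=
  single [v j, w j] 1 + single [w j, g 1 (v j)] 1

lemma boundary_arc (j : ℕ) :
    boundary (arc R g v w j) = single [g 1 (v j)] 1 - single [v j] 1 := by
  simp [arc]

variable [NeZero q] {g} (z : OrderedChain R E)

variable (g) in
/-- The join of `z` with the first `j` circles. -/
noncomputable def joinSphere : ℕ → OrderedChain R E
  | 0 => z
  | j + 1 => joinRight (joinSphere j) (∑ c, map (g c) (arc R g v w j))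

variable (g) in
/-- The cone over `joinSphere` with apex `v j`. -/
noncomputable def joinDisk (j : ℕ) : OrderedChain R E :=
  joinRight (joinSphere g v w z j) (single [v j] 1)

variable (g) in
/-- The part of the next `joinSphere` between a `joinDisk` and its first rotation, a fundamental
domain of the action. -/
noncomputable def joinLune (j : ℕ) : OrderedChain R E :=
  joinRight (joinSphere g v w z j) (arc R g v w j)

variable {z} (hg : ∀ c c' p, g c (g c' p) = g (c + c') p)
include hg

lemma map_joinSphere (hz : ∀ c, map (g c) z = z) (c : ZMod q) (j : ℕ) :
    map (g c) (joinSphere g v w z j) = joinSphere g v w z j := by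
  induction j with
  | zero => exact hz c
  | succ j ih =>
    have hcomp (c' : ZMod q) : g c ∘ g c' = g (c + c') := funext (hg c c')
    simp only [joinSphere, map_joinRight, ih, map_sum, map_map, hcomp]
    exact Equiv.sum_comp (Equiv.addLeft c)
      fun c ↦ joinRight (joinSphere g v w z j) (map (g c) (arc R g v w j))

lemma joinSphere_succ (hz : ∀ c, map (g c) z = z) (j : ℕ) :
    joinSphere g v w z (j + 1) = ∑ c, map (g c) (joinLune g v w z j) := by
  simp only [joinSphere, joinLune, map_sum, map_joinRight, map_joinSphere v w hg hz]

lemma boundary_joinSphere (hz : boundary z = 0) (j : ℕ) :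
    boundary (joinSphere g v w z j) = 0 := by
  induction j with
  | zero => exact hz
  | succ j ih =>
    have hshift := Equiv.sum_comp (Equiv.addRight (1 : ZMod q))
      fun c ↦ cone (g c (v j)) (joinSphere g v w z j)
    simpa [joinSphere, boundary_joinRight ih, boundary_map, boundary_arc, hg, sub_eq_zero]
      using hshift

lemma boundary_joinDisk (hz : boundary z = 0) (j : ℕ) :
    boundary (joinDisk g v w z j) = joinSphere g v w z j := by
  rw [joinDisk, boundary_joinRight (boundary_joinSphere v w hg hz j)]
  simp

lemma boundary_joinLune (hz : boundary z = 0) (hz' : ∀ c, map (g c) z = z) (j : ℕ) :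
    boundary (joinLune g v w z j) = map (g 1) (joinDisk g v w z j) - joinDisk g v w z j := by
  rw [joinLune, boundary_joinRight (boundary_joinSphere v w hg hz j), boundary_arc, map_sub,
    joinDisk, map_joinRight, map_joinSphere v w hg hz', map_single, List.map_singleton]

end JoinTower

end OrderedChain

/-! ### Sperner's lemma on the boundary of a simplex around the origin -/

namespace Sperner

open Finsupp (single supported)
open OrderedChain OrderedCochain

/-- The vertices `e_0, …, e_m, -(e_0 + ⋯ + e_m)` of a simplex around the origin. -/
noncomputable def vertex (m j : ℕ) : EuclideanSpace ℝ (Fin (m + 1)) :=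
  if h : j < m + 1 then EuclideanSpace.single ⟨j, h⟩ 1 else -∑ i, EuclideanSpace.single i 1

/-- The `j`-th coordinate for `j ≤ m`, and minus the sum of the coordinates for `j = m + 1`. -/
noncomputable def coord (m j : ℕ) : EuclideanSpace ℝ (Fin (m + 1)) →L[ℝ] ℝ :=
  if h : j < m + 1 then EuclideanSpace.proj ⟨j, h⟩ else -∑ i, EuclideanSpace.proj i

/-- The simplex spanned by the first `r` vertices. -/
noncomputable def simplex (m r : ℕ) : List (EuclideanSpace ℝ (Fin (m + 1))) :=
  (List.range r).reverse.map (vertex m)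

/-- The vertices of the facet opposite to the `j`-th vertex. -/
def oppositeFacet (m j : ℕ) : Set (EuclideanSpace ℝ (Fin (m + 1))) :=
  vertex m '' {i | i ≤ m + 1 ∧ i ≠ j}

variable {m : ℕ}

lemma coord_vertex {i j : ℕ} (hi : i ≤ m + 1) (hj : j ≤ m + 1) :
    coord m j (vertex m i) = if i = j then (if j < m + 1 then 1 else (m + 1 : ℝ))
      else if i < m + 1 ∧ j < m + 1 then 0 else -1 := by
  rcases Nat.lt_or_eq_of_le hi with hi | rfl <;> rcases Nat.lt_or_eq_of_le hj with hj | rfl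
  · simp [coord, vertex, hi, hj, eq_comm]
  · simp [coord, vertex, hi, hi.ne]
  · simp [coord, vertex, hj, hj.ne']
  · simp [coord, vertex]

lemma coord_nonpos_of_mem_oppositeFacet {j : ℕ} (hj : j ≤ m + 1)
    {p : EuclideanSpace ℝ (Fin (m + 1))} (hp : p ∈ oppositeFacet m j) : coord m j p ≤ 0 := by
  obtain ⟨i, ⟨hi, hij⟩, rfl⟩ := hp
  rw [coord_vertex hi hj, if_neg hij]
  split_ifs <;> norm_num

lemma exists_pos_on_oppositeFacet {j : ℕ} (hj : j ≤ m + 1) :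
    ∃ f : EuclideanSpace ℝ (Fin (m + 1)) →L[ℝ] ℝ, ∀ p ∈ oppositeFacet m j, 0 < f p := by
  refine ⟨-coord m (m + 1) - (m + 2 : ℝ) • coord m j, ?_⟩
  rintro _ ⟨i, ⟨hi, hij⟩, rfl⟩
  simp only [sub_apply, neg_apply, smul_apply, coord_vertex hi hj, coord_vertex hi le_rfl,
    smul_eq_mul, if_neg hij]
  split_ifs <;> first | omega | linarith

lemma ne_zero_of_mem_convexHull_oppositeFacet {j : ℕ} (hj : j ≤ m + 1)
    {p : EuclideanSpace ℝ (Fin (m + 1))} (hp : p ∈ convexHull ℝ (oppositeFacet m j)) : p ≠ 0 := by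
  obtain ⟨f, hf⟩ := exists_pos_on_oppositeFacet hj
  have hpos : 0 < f p := convexHull_min hf (convex_halfSpace_gt f.isLinear 0) hp
  rintro rfl
  simp at hpos

lemma mem_simplex {r : ℕ} {p : EuclideanSpace ℝ (Fin (m + 1))} :
    p ∈ simplex m r ↔ ∃ i < r, vertex m i = p := by
  simp [simplex]

lemma simplex_succ (r : ℕ) : simplex m (r + 1) = vertex m r :: simplex m r := by
  simp [simplex, List.range_succ]

lemma simplex_subset_oppositeFacet {r j : ℕ} (hr : r ≤ j) (hj : j ≤ m + 1) :
    ∀ p ∈ simplex m r, p ∈ oppositeFacet m j := by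
  intro p hp
  obtain ⟨i, hi, rfl⟩ := mem_simplex.1 hp
  exact ⟨i, ⟨by omega, by omega⟩, rfl⟩

lemma exists_subset_oppositeFacet {r : ℕ} (hr : r ≤ m + 2)
    {l : List (EuclideanSpace ℝ (Fin (m + 1)))} (hl : l.Sublist (simplex m r))
    (hlen : l.length < r) : ∃ j < r, ∀ p ∈ l, p ∈ oppositeFacet m j := by
  obtain ⟨l, hlr, rfl⟩ := List.sublist_map_iff.1 hl
  obtain ⟨j, hj, hjl⟩ : ∃ j ∈ Finset.range r, j ∉ l.toFinset := by
    refine Finset.exists_mem_notMem_of_card_lt_card ?_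
    simpa using (List.toFinset_card_le l).trans_lt (by simpa using hlen)
  refine ⟨j, Finset.mem_range.1 hj, fun p hp ↦ ?_⟩
  obtain ⟨i, hi, rfl⟩ := List.mem_map.1 hp
  have hir : i < r := by simpa using hlr.subset hi
  exact ⟨i, ⟨by omega, fun hij ↦ hjl (by simpa [← hij] using hi)⟩, rfl⟩

section Labelling

variable {R : Type*} [CommRing R] {d : EuclideanSpace ℝ (Fin (m + 1)) → ℕ}
  (hd : ∀ p, d p ≤ m + 1) (hpos : ∀ p ≠ 0, 0 < coord m (d p) p)
include hpos

lemma label_ne_of_mem_hull {j : ℕ} (hj : j ≤ m + 1) {l : List (EuclideanSpace ℝ (Fin (m + 1)))}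
    (hl : ∀ p ∈ l, p ∈ oppositeFacet m j) {p : EuclideanSpace ℝ (Fin (m + 1))} (hp : p ∈ hull l) :
    d p ≠ j := by
  have hp' : p ∈ convexHull ℝ (oppositeFacet m j) := convexHull_mono hl hp
  rintro rfl
  have hneg : coord m (d p) p ≤ 0 := convexHull_min
    (fun _ ↦ coord_nonpos_of_mem_oppositeFacet hj)
    (convex_halfSpace_le (coord m (d p)).isLinear 0) hp'
  exact (hpos p (ne_zero_of_mem_convexHull_oppositeFacet hj hp')).not_ge hneg

lemma labelCount_subdivide_eq_zero {r j : ℕ} (hjr : j < r) (hj : j ≤ m + 1) (N : ℕ)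
    {l : List (EuclideanSpace ℝ (Fin (m + 1)))} (hl : ∀ p ∈ l, p ∈ oppositeFacet m j) :
    labelCount R d r ((subdivide R _ ^ N) (single l 1)) = 0 := by
  refine eq_zero_of_mem_supported ?_ (subdivide_pow_single_mem_supported_hull N l)
  exact fun _ hl' ↦ labelCount_eq_zero_of_forall_ne hjr fun _ hp ↦
    label_ne_of_mem_hull hpos hj hl (hl' _ hp)

lemma labelCount_subdivide_boundary_simplex_succ (N : ℕ) {r : ℕ} (hr : r ≤ m + 1) :
    labelCount R d r ((subdivide R _ ^ N) (boundary (single (simplex m (r + 1)) 1)))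
      = labelCount R d r ((subdivide R _ ^ N) (single (simplex m r) 1)) := by
  have hcone : labelCount R d r ((subdivide R _ ^ N)
      (cone (vertex m r) (boundary (single (simplex m r) 1)))) = 0 := by
    refine eq_zero_of_mem_supported
      (f := labelCount R d r ∘ₗ (subdivide R _ ^ N) ∘ₗ cone (vertex m r)) (fun l hl ↦ ?_)
      (contract_single_mem_supported 1 (simplex m r))
    have hlen : l.length + 1 = r := by simpa [simplex] using hl.2
    obtain ⟨j, hj, hlj⟩ := exists_subset_oppositeFacet (by omega) hl.1 (by omega)
    simp only [LinearMap.comp_apply, cone_single]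
    refine labelCount_subdivide_eq_zero hpos hj (by omega) N (List.forall_mem_cons.2 ⟨?_, hlj⟩)
    exact ⟨r, ⟨hr, hj.ne'⟩, rfl⟩
  rw [simplex_succ, boundary_cons, map_sub, map_sub, hcone, sub_zero]

include hd

lemma labelCount_subdivide_simplex (N : ℕ) {r : ℕ} (hr : r ≤ m + 1) :
    labelCount R d r ((subdivide R _ ^ N) (single (simplex m r) 1)) = 1 := by
  induction r with
  | zero => simp [simplex, subdivide_pow_nil, labelCount]
  | succ r ih =>
    have hlabel : ∀ p ∈ hull (simplex m (r + 1)), d p ≤ r := by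
      intro p hp
      by_contra! hlt
      exact label_ne_of_mem_hull hpos (hd p) (simplex_subset_oppositeFacet hlt (hd p)) hp rfl
    calc labelCount R d (r + 1) ((subdivide R _ ^ N) (single (simplex m (r + 1)) 1))
        = labelCount R d r (boundary ((subdivide R _ ^ N) (single (simplex m (r + 1)) 1))) := by
          refine (eq_of_mem_supported (f := labelCount R d r ∘ₗ boundary) ?_
            (subdivide_pow_single_mem_supported_hull N _)).symm
          exact fun l hl ↦ labelCount_boundary fun p hp ↦ hlabel p (hl p hp)
      _ = labelCount R d r ((subdivide R _ ^ N) (single (simplex m r) 1)) := by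
          rw [boundary_subdivide_pow,
            labelCount_subdivide_boundary_simplex_succ hpos N (by omega)]
      _ = 1 := ih (by omega)

theorem labelCount_subdivide_boundary_simplex (N : ℕ) :
    labelCount R d (m + 1) ((subdivide R _ ^ N) (boundary (single (simplex m (m + 2)) 1))) = 1 := by
  rw [labelCount_subdivide_boundary_simplex_succ hpos N le_rfl,
    labelCount_subdivide_simplex hd hpos N le_rfl]

end Labelling

end Sperner

/-! ### Equivariant labellings of an iterated join -/

namespace LensSpace

open Finsupp (single supported)
open OrderedChain OrderedCochain

section Rotate

variable {q k : ℕ} [NeZero q]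

/-- The action of `c : ZMod q` on `ℂ^k` whose orbits on the unit sphere are the points of the lens
space with parameters `ℓ`. -/
noncomputable def rotate (ℓ : Fin k → ℤ) (c : ZMod q) :
    EuclideanSpace ℂ (Fin k) →ₗᵢ[ℝ] EuclideanSpace ℂ (Fin k) where
  toFun b := WithLp.toLp 2 fun j ↦ ZMod.stdAddChar (c * (ℓ j : ZMod q)) * b j
  map_add' a b := by ext j; simp [mul_add]
  map_smul' r b := by ext j; simp [mul_left_comm]
  norm_map' b := by simp [EuclideanSpace.norm_eq]

variable (ℓ : Fin k → ℤ)

@[simp]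
lemma rotate_apply (c : ZMod q) (b : EuclideanSpace ℂ (Fin k)) (j : Fin k) :
    rotate ℓ c b j = ZMod.stdAddChar (c * (ℓ j : ZMod q)) * b j := rfl

lemma rotate_rotate (c c' : ZMod q) (b : EuclideanSpace ℂ (Fin k)) :
    rotate ℓ c (rotate ℓ c' b) = rotate ℓ (c + c') b := by
  ext j
  simp [add_mul, AddChar.map_add_eq_mul, mul_assoc]

@[simp]
lemma rotate_zero (b : EuclideanSpace ℂ (Fin k)) : rotate ℓ (0 : ZMod q) b = b := by
  ext j
  simp

end Rotate

section HalfSpace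

variable {E : Type*} [NormedAddCommGroup E] [NormedSpace ℝ E] {l l' : List E}

/-- The vertices lie in an open half space bounded by a hyperplane through the origin. -/
def InHalfSpace (l : List E) : Prop := ∃ f : E →L[ℝ] ℝ, ∀ p ∈ l, 0 < f p

lemma InHalfSpace.ne_zero_of_mem_hull (hl : InHalfSpace l) {p : E} (hp : p ∈ hull l) : p ≠ 0 := by
  obtain ⟨f, hf⟩ := hl
  have hpos : 0 < f p := hull_subset (convex_halfSpace_gt f.isLinear 0) hf hp
  rintro rfl
  simp at hpos

lemma InHalfSpace.append (f : E →L[ℝ] ℝ) (hf : ∀ p ∈ l, 0 < f p) (hf' : ∀ p ∈ l', f p = 0)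
    (hl' : InHalfSpace l') : InHalfSpace (l ++ l') := by
  obtain ⟨f', hl'⟩ := hl'
  have hlarge : ∀ p ∈ {p | p ∈ l}, ∀ᶠ C : ℝ in Filter.atTop, 0 < C * f p + f' p := fun p hp ↦
    (Filter.tendsto_atTop_add_const_right _ _
      (Filter.tendsto_id.atTop_mul_const (hf p hp))).eventually_gt_atTop 0
  obtain ⟨C, hC⟩ := ((Filter.eventually_all_finite (List.finite_toSet l)).2 hlarge).exists
  refine ⟨C • f + f', fun p hp ↦ ?_⟩
  obtain hp | hp := List.mem_append.1 hp
  · exact hC p hp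
  · simpa [hf' p hp] using hl' p hp

lemma inner_add_left_pos_of_norm_eq_one {F : Type*} [NormedAddCommGroup F] [InnerProductSpace ℝ F]
    {a b : F} (ha : ‖a‖ = 1) (hb : ‖b‖ = 1) (hab : a + b ≠ 0) : 0 < inner ℝ (a + b) a := by
  have hnorm : 0 < ‖a + b‖ ^ 2 := by positivity
  rw [norm_add_sq_real, ha, hb, real_inner_comm] at hnorm
  rw [inner_add_left, real_inner_self_eq_norm_sq, ha]
  linarith

end HalfSpace

section JoinSpace

/-- The vector space `ℝ^{m+1} × ℂ^k`, whose nonzero rays form the join of `S^m` and `S^{2k-1}`. -/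
abbrev JoinSpace (m k : ℕ) : Type :=
  EuclideanSpace ℝ (Fin (m + 1)) × EuclideanSpace ℂ (Fin k)

variable {q m k : ℕ} [NeZero q] {ℓ : Fin k → ℤ}

variable (m) in
/-- The action of `c : ZMod q` on the join, trivial on the first factor. -/
noncomputable def rotateJoin (ℓ : Fin k → ℤ) (c : ZMod q) : JoinSpace m k →ₗ[ℝ] JoinSpace m k :=
  LinearMap.prodMap LinearMap.id (rotate ℓ c).toLinearMap

@[simp]
lemma rotateJoin_apply (c : ZMod q) (p : JoinSpace m k) :
    rotateJoin m ℓ c p = (p.1, rotate ℓ c p.2) := rfl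

lemma rotateJoin_rotateJoin (c c' : ZMod q) (p : JoinSpace m k) :
    rotateJoin m ℓ c (rotateJoin m ℓ c' p) = rotateJoin m ℓ (c + c') p :=
  Prod.ext rfl (rotate_rotate ℓ c c' p.2)

/-- The vector in the `j`-th complex coordinate line with coordinate `u j`. -/
noncomputable def circlePoint (m : ℕ) (u : Fin k → ℂ) (j : ℕ) : JoinSpace m k :=
  (0, WithLp.toLp 2 fun i ↦ if (i : ℕ) = j then u i else 0)

lemma rotateJoin_circlePoint (c : ZMod q) (u : Fin k → ℂ) (j : ℕ) :
    rotateJoin m ℓ c (circlePoint m u j)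
      = circlePoint m (fun i ↦ ZMod.stdAddChar (c * (ℓ i : ZMod q)) * u i) j := by
  refine Prod.ext rfl (PiLp.ext fun i ↦ ?_)
  simp [circlePoint]

/-- A nonempty simplex in the join of `S^m` with the first `j` circles. -/
structure IsSphereSimplex (j : ℕ) (l : List (JoinSpace m k)) : Prop where
  ne_nil : l ≠ []
  inHalfSpace : InHalfSpace l
  snd_eq_zero : ∀ p ∈ l, ∀ i : Fin k, j ≤ i → p.2 i = 0

/-- A nonempty simplex in the `j`-th complex coordinate line that avoids the origin. -/
structure IsCircleSimplex (j : Fin k) (l : List (JoinSpace m k)) : Prop where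
  ne_nil : l ≠ []
  exists_pos : ∃ f : ℂ →L[ℝ] ℝ, ∀ p ∈ l, 0 < f (p.2 j)
  snd_eq_zero : ∀ p ∈ l, ∀ i ≠ j, p.2 i = 0

lemma IsCircleSimplex.append {j : Fin k} {l l' : List (JoinSpace m k)}
    (hl : IsCircleSimplex j l) (hl' : IsSphereSimplex j l') :
    IsSphereSimplex (j + 1) (l ++ l') ∧ 2 ≤ (l ++ l').length := by
  refine ⟨⟨by simp [hl.ne_nil], ?_, fun p hp i hi ↦ ?_⟩, ?_⟩
  · obtain ⟨f, hf⟩ := hl.exists_pos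
    refine hl'.inHalfSpace.append
      (f ∘L PiLp.proj (𝕜 := ℝ) 2 (fun _ ↦ ℂ) j ∘L ContinuousLinearMap.snd ℝ _ _) hf fun p hp ↦ ?_
    simp [hl'.snd_eq_zero p hp j le_rfl]
  · obtain hp | hp := List.mem_append.1 hp
    · exact hl.snd_eq_zero p hp i (by rintro rfl; omega)
    · exact hl'.snd_eq_zero p hp i (by omega)
  · have h := List.length_pos_of_ne_nil hl.ne_nil
    have h' := List.length_pos_of_ne_nil hl'.ne_nil
    rw [List.length_append]
    omega

lemma isCircleSimplex_pair (j : Fin k) {u u' : Fin k → ℂ} (hu : ‖u j‖ = 1) (hu' : ‖u' j‖ = 1)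
    (hne : u j + u' j ≠ 0) :
    IsCircleSimplex j [circlePoint m u j, circlePoint m u' j] where
  ne_nil := List.cons_ne_nil _ _
  exists_pos := by
    refine ⟨innerSL ℝ (u j + u' j),
      List.forall_mem_cons.2 ⟨?_, List.forall_mem_singleton.2 ?_⟩⟩
    · simpa only [circlePoint, if_true, innerSL_apply_apply] using
        inner_add_left_pos_of_norm_eq_one hu hu' hne
    · rw [add_comm] at hne ⊢
      simpa only [circlePoint, if_true, innerSL_apply_apply] using
        inner_add_left_pos_of_norm_eq_one hu' hu hne
  snd_eq_zero := by
    simp +contextual [circlePoint, Fin.val_inj]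

lemma isCircleSimplex_singleton (j : Fin k) {u : Fin k → ℂ} (hu : ‖u j‖ = 1) :
    IsCircleSimplex (m := m) j [circlePoint m u j] := by
  have hne : u j + u j ≠ 0 := by
    rw [← two_mul]
    exact mul_ne_zero two_ne_zero (norm_ne_zero_iff.1 (by simp [hu]))
  obtain ⟨-, ⟨f, hf⟩, hzero⟩ := isCircleSimplex_pair (m := m) j hu hu hne
  exact ⟨by simp, ⟨f, by simp_all⟩, by simp_all⟩

lemma exists_sqrt_stdAddChar (hq : 2 ≤ q) (hℓ : ∀ j, IsCoprime (ℓ j) (q : ℤ)) :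
    ∃ ω : Fin k → ℂ, (∀ i, ω i * ω i = ZMod.stdAddChar (ℓ i : ZMod q)) ∧ ∀ i, 1 + ω i ≠ 0 := by
  choose ω hω using fun i ↦ IsAlgClosed.exists_pow_nat_eq
    (ZMod.stdAddChar (ℓ i : ZMod q) : ℂ) two_pos
  refine ⟨ω, fun i ↦ by rw [← sq, hω], fun i hi ↦ ?_⟩
  have hone : ZMod.stdAddChar (ℓ i : ZMod q) = (1 : ℂ) := by
    rw [← hω i, eq_neg_of_add_eq_zero_right hi, neg_one_sq]
  have hdvd : (q : ℤ) ∣ ℓ i := by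
    rw [← ZMod.intCast_zmod_eq_zero_iff_dvd]
    exact ZMod.injective_stdAddChar (by simpa using hone)
  have hunit : IsUnit (q : ℤ) := (hℓ i).isUnit_of_dvd' hdvd dvd_rfl
  rw [Int.ofNat_isUnit, Nat.isUnit_iff] at hunit
  omega

section Supported

variable {R : Type*} [CommRing R] {ω : Fin k → ℂ}
  (hω : ∀ i, ω i * ω i = ZMod.stdAddChar (ℓ i : ZMod q)) (hω' : ∀ i, 1 + ω i ≠ 0)
include hω hω'

lemma map_arc_mem_supported (c : ZMod q) (j : Fin k) :
    map (rotateJoin m ℓ c)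
        (arc R (fun c : ZMod q ↦ ⇑(rotateJoin m ℓ c)) (circlePoint m 1) (circlePoint m ω) j)
      ∈ supported R R {l | IsCircleSimplex j l} := by
  have hnorm : ‖ω j‖ = 1 := by
    have hsq := congrArg norm (hω j)
    rw [norm_mul, AddChar.norm_apply] at hsq
    nlinarith [norm_nonneg (ω j)]
  set ζ : ℂ := ZMod.stdAddChar (c * (ℓ j : ZMod q))
  have hζ : ‖ζ‖ = 1 := AddChar.norm_apply _ _
  have hζ' : ζ ≠ 0 := norm_ne_zero_iff.1 (by simp [hζ])
  have hωj : ω j ≠ 0 := norm_ne_zero_iff.1 (by simp [hnorm])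
  simp only [arc, map_add, map_single, List.map_cons, List.map_nil, rotateJoin_circlePoint]
  refine add_mem (Finsupp.single_mem_supported R 1 (isCircleSimplex_pair j ?_ ?_ ?_))
    (Finsupp.single_mem_supported R 1 (isCircleSimplex_pair j ?_ ?_ ?_))
  · simp
  · simp [hnorm]
  · rw [← mul_add]
    exact mul_ne_zero hζ' (hω' j)
  · simp [hnorm]
  · simp
  · rw [← mul_add, one_mul, ← hω, Pi.one_apply, mul_one, ← mul_one_add]
    exact mul_ne_zero hζ' (mul_ne_zero hωj (hω' j))

variable {z : OrderedChain R (JoinSpace m k)}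
  (hz : z ∈ supported R R {l | IsSphereSimplex 0 l})
include hz

lemma joinSphere_mem_supported {j : ℕ} (hj : j ≤ k) :
    joinSphere (fun c : ZMod q ↦ ⇑(rotateJoin m ℓ c)) (circlePoint m 1) (circlePoint m ω) z j
      ∈ supported R R {l | IsSphereSimplex j l} := by
  induction j with
  | zero => exact hz
  | succ j ih =>
    refine Finsupp.supported_mono ?_ (joinRight_mem_supported
      (sum_mem fun c _ ↦ map_arc_mem_supported hω hω' c ⟨j, hj⟩) (ih (by omega)))
    rintro _ ⟨l, hl, l', hl', rfl⟩
    exact (hl.append hl').1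

lemma joinDisk_mem_supported {j : ℕ} (hj : j < k) :
    joinDisk (fun c : ZMod q ↦ ⇑(rotateJoin m ℓ c)) (circlePoint m 1) (circlePoint m ω) z j
      ∈ supported R R {l | 2 ≤ l.length ∧ InHalfSpace l} := by
  refine Finsupp.supported_mono ?_ (joinRight_mem_supported
    (Finsupp.single_mem_supported R 1
      (isCircleSimplex_singleton ⟨j, hj⟩ (u := 1) (by simp)))
    (joinSphere_mem_supported hω hω' hz hj.le))
  rintro _ ⟨l, hl, l', hl', rfl⟩
  obtain ⟨h, hlen⟩ := IsCircleSimplex.append hl hl'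
  exact ⟨hlen, h.inHalfSpace⟩

lemma joinLune_mem_supported {j : ℕ} (hj : j < k) :
    joinLune (fun c : ZMod q ↦ ⇑(rotateJoin m ℓ c)) (circlePoint m 1) (circlePoint m ω) z j
      ∈ supported R R {l | 2 ≤ l.length ∧ InHalfSpace l} := by
  have hid : ⇑(rotateJoin m ℓ (0 : ZMod q)) = id := funext fun p ↦ by simp
  have harc := map_arc_mem_supported (m := m) (R := R) hω hω' 0 ⟨j, hj⟩
  refine Finsupp.supported_mono ?_ (joinRight_mem_supported
    (by simpa [hid, map] using harc) (joinSphere_mem_supported hω hω' hz hj.le))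
  rintro _ ⟨l, hl, l', hl', rfl⟩
  obtain ⟨h, hlen⟩ := IsCircleSimplex.append hl hl'
  exact ⟨hlen, h.inHalfSpace⟩

end Supported

section BaseSphere

variable {R : Type*} [CommRing R]

variable (m k R) in
/-- The sphere `S^m` of the join as the boundary of a simplex around the origin. -/
noncomputable def baseSphere : OrderedChain R (JoinSpace m k) :=
  map (LinearMap.inl ℝ _ _) (boundary (single (Sperner.simplex m (m + 2)) 1))

lemma boundary_baseSphere : boundary (baseSphere m k R) = 0 := by
  rw [baseSphere, boundary_map, boundary_boundary, map_zero]

lemma map_rotateJoin_baseSphere (c : ZMod q) :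
    map (rotateJoin m ℓ c) (baseSphere m k R) = baseSphere m k R := by
  have hfix : rotateJoin m ℓ c ∘ LinearMap.inl ℝ _ _ = LinearMap.inl ℝ _ _ :=
    funext fun p ↦ Prod.ext rfl (map_zero (rotate ℓ c))
  rw [baseSphere, map_map, hfix]

lemma baseSphere_mem_supported :
    baseSphere m k R ∈ supported R R {l | IsSphereSimplex 0 l} := by
  refine map_mem_of_mem_supported _ (fun l hl ↦ ?_) (contract_single_mem_supported _ _)
  rw [map_single]
  have hlen : l.length + 1 = m + 2 := by simpa [Sperner.simplex] using hl.2
  refine Finsupp.single_mem_supported R 1 ⟨?_, ?_, ?_⟩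
  · exact List.ne_nil_of_length_pos (by rw [List.length_map]; omega)
  · obtain ⟨j, hj, hlj⟩ := Sperner.exists_subset_oppositeFacet le_rfl hl.1 (by omega)
    obtain ⟨f, hf⟩ := Sperner.exists_pos_on_oppositeFacet (show j ≤ m + 1 by omega)
    exact ⟨f ∘L ContinuousLinearMap.fst ℝ _ _, by simpa using fun p hp ↦ hf p (hlj p hp)⟩
  · simp

end BaseSphere

end JoinSpace

section Labelling

variable {q m k : ℕ}

/-- A set on which some label `j ≤ m + 1` is missing, or one of the first `n` phases is defined and
constant. -/
def IsSmallSet (d : JoinSpace m k → ℕ) (t : ℕ → JoinSpace m k → ZMod q) (n : ℕ)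
    (W : Set (JoinSpace m k)) : Prop :=
  (∃ j ≤ m + 1, ∀ p ∈ W, d p ≠ j) ∨ (∀ p ∈ W, p.2 ≠ 0) ∧ ∃ i < n, ∃ c, ∀ p ∈ W, t i p = c

variable {d : JoinSpace m k → ℕ} {t : ℕ → JoinSpace m k → ZMod q} (hd : ∀ p, d p ≤ m + 1)
include hd

lemma IsSmallSet.isSmall {n : ℕ} {W : Set (JoinSpace m k)} (hW : IsSmallSet d t n W)
    {l : List (JoinSpace m k)} (hl : ∀ p ∈ l, p ∈ W) :
    IsSmall (labelCocycle (ZMod q) d (m + 1)) t {p | p.2 ≠ 0} n l :=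
  hW.imp (fun ⟨_, hj, h⟩ ↦ labelCocycle_vanishesOn hd hj fun p hp ↦ h p (hl p hp))
    fun ⟨hD, i, hi, c, hc⟩ ↦ ⟨fun p hp ↦ hD p (hl p hp), i, hi, c, fun p hp ↦ hc p (hl p hp)⟩

lemma labelCount_subdivide_baseSphere {R : Type*} [CommRing R]
    (hdpos : ∀ a ≠ 0, 0 < Sperner.coord m (d (a, 0)) a) (N : ℕ) :
    labelCount R d (m + 1) ((subdivide R _ ^ N) (baseSphere m k R)) = 1 := by
  rw [baseSphere, subdivide_pow_map, labelCount_map]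
  exact Sperner.labelCount_subdivide_boundary_simplex (fun a ↦ hd _) hdpos N

lemma exists_forall_subdivide_pow_mem_supported_isSmall {n : ℕ}
    (hsmall : ∀ p ≠ 0, ∃ W ∈ 𝓝 p, IsSmallSet d t n W)
    {𝒳 : Set (OrderedChain (ZMod q) (JoinSpace m k))} (h𝒳 : 𝒳.Finite)
    (hsupp : ∀ x ∈ 𝒳, x ∈ supported (ZMod q) (ZMod q) {l | 2 ≤ l.length ∧ InHalfSpace l}) :
    ∃ N, ∀ x ∈ 𝒳, (subdivide (ZMod q) _ ^ N) x ∈ supported (ZMod q) (ZMod q)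
      {l | IsSmall (labelCocycle (ZMod q) d (m + 1)) t {p | p.2 ≠ 0} n l ∧ 2 ≤ l.length} := by
  obtain ⟨N, hN⟩ := exists_forall_subdivide_pow_mem_supported h𝒳 hsupp
    (fun l hl ↦ List.ne_nil_of_length_pos (zero_lt_two.trans_le hl.1))
    (𝒲 := {W | IsSmallSet d t n W}) fun l hl p hp ↦
      let ⟨W, hWp, hW⟩ := hsmall p (hl.2.ne_zero_of_mem_hull hp)
      ⟨W, hW, hWp⟩
  refine ⟨N, fun x hx ↦ Finsupp.supported_mono ?_ (hN x hx)⟩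
  rintro l' ⟨⟨l, hl, hlen⟩, W, hW, hlW⟩
  exact ⟨hW.isSmall hd hlW, hlen ▸ hl.1⟩

variable [NeZero q] {ℓ : Fin k → ℤ}
  (hdg : ∀ (c : ZMod q) p, d (rotateJoin m ℓ c p) = d p)
  (ht : ∀ i c p, p.2 ≠ 0 → t i (rotateJoin m ℓ c p) = t i p + c)
include hdg ht

lemma exists_labelCocycle_subdivide_eq_zero {K : ℕ}
    (hsmall : ∀ p ≠ 0, ∃ W ∈ 𝓝 p, IsSmallSet d t (2 * K + 1) W)
    {X Y : ℕ → OrderedChain (ZMod q) (JoinSpace m k)}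
    (hX : ∀ j ≤ K, X j ∈ supported (ZMod q) (ZMod q) {l | 2 ≤ l.length ∧ InHalfSpace l})
    (hY : ∀ j ≤ K, Y j ∈ supported (ZMod q) (ZMod q) {l | 2 ≤ l.length ∧ InHalfSpace l})
    (hXY : ∀ j ≤ K, boundary (Y j) = map (rotateJoin m ℓ (1 : ZMod q)) (X j) - X j)
    (hYX : ∀ j < K, boundary (X (j + 1)) = ∑ c : ZMod q, map (rotateJoin m ℓ c) (Y j)) :
    ∃ N, labelCocycle (ZMod q) d (m + 1) ((subdivide _ _ ^ N) (X 0)) = 0 := by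
  have hsupp : ∀ x ∈ X '' Set.Iic K ∪ Y '' Set.Iic K,
      x ∈ supported (ZMod q) (ZMod q) {l | 2 ≤ l.length ∧ InHalfSpace l} := by
    rintro _ (⟨j, hj, rfl⟩ | ⟨j, hj, rfl⟩)
    exacts [hX j hj, hY j hj]
  obtain ⟨N, hN⟩ := exists_forall_subdivide_pow_mem_supported_isSmall hd hsmall
    (((Set.finite_Iic K).image X).union ((Set.finite_Iic K).image Y)) hsupp
  refine ⟨N, eq_zero_of_tower (ψ := labelCocycle (ZMod q) d (m + 1))
    (g := fun c ↦ rotateJoin m ℓ c)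
    (x := fun j ↦ (subdivide _ _ ^ N) (X j)) (y := fun j ↦ (subdivide _ _ ^ N) (Y j))
    (coboundary_boundary _) (fun c x ↦ ?_) (fun i c p hp ↦ ht i c p hp)
    (fun j hj ↦ hN _ (.inl ⟨j, hj, rfl⟩)) (fun j hj ↦ hN _ (.inr ⟨j, hj, rfl⟩))
    (fun j hj ↦ ?_) fun j hj ↦ ?_⟩
  · rw [labelCocycle_map]
    congr 2
    exact funext (hdg c)
  · rw [boundary_subdivide_pow, hXY j hj, map_sub, subdivide_pow_map]
  · simp only [boundary_subdivide_pow, hYX j hj, map_sum, subdivide_pow_map]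

theorem exists_ne_zero_forall_not_isSmallSet {K : ℕ} (hk : k = K + 1) (hq : 2 ≤ q)
    (hℓ : ∀ j, IsCoprime (ℓ j) (q : ℤ)) (hdpos : ∀ a ≠ 0, 0 < Sperner.coord m (d (a, 0)) a) :
    ∃ p ≠ 0, ∀ W ∈ 𝓝 p, ¬ IsSmallSet d t (2 * K + 1) W := by
  by_contra! hsmall
  obtain ⟨ω, hω, hω'⟩ := exists_sqrt_stdAddChar hq hℓ
  set g : ZMod q → JoinSpace m k → JoinSpace m k := fun c ↦ rotateJoin m ℓ c
  set v : ℕ → JoinSpace m k := circlePoint m 1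
  set w : ℕ → JoinSpace m k := circlePoint m ω
  set z := baseSphere m k (ZMod q)
  have hg : ∀ c c' p, g c (g c' p) = g (c + c') p := rotateJoin_rotateJoin
  have hz : boundary z = 0 := boundary_baseSphere
  have hz' : ∀ c, map (g c) z = z := map_rotateJoin_baseSphere
  obtain ⟨N, hN⟩ := exists_labelCocycle_subdivide_eq_zero hd hdg ht hsmall
    (X := joinDisk g v w z) (Y := joinLune g v w z)
    (fun j hj ↦ joinDisk_mem_supported hω hω' baseSphere_mem_supported (by omega))
    (fun j hj ↦ joinLune_mem_supported hω hω' baseSphere_mem_supported (by omega))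
    (fun j _ ↦ boundary_joinLune v w hg hz hz' j)
    (fun j _ ↦ (boundary_joinDisk v w hg hz (j + 1)).trans (joinSphere_succ v w hg hz' j))
  rw [labelCocycle, coboundary, LinearMap.comp_apply, boundary_subdivide_pow,
    boundary_joinDisk v w hg hz, joinSphere, labelCount_subdivide_baseSphere hd hdpos] at hN
  have : Fact (1 < q) := ⟨hq⟩
  exact one_ne_zero hN

end Labelling

end LensSpace

/-! ### Sets contractible in a space -/

/-- A subset of a space is contractible in it if its inclusion is nullhomotopic, as required of the
members of a categorical cover. -/
def ContractibleIn {X : Type*} [TopologicalSpace X] (U : Set X) : Prop :=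
  ContinuousMap.Nullhomotopic (⟨Subtype.val, continuous_subtype_val⟩ : C(U, X))

/-- A space has a categorical cover of length `k` if it is covered by `k + 1` open sets contractible
in it, so that its Lusternik–Schnirelmann category is the least such `k`. -/
def HasCategoricalCover (X : Type*) [TopologicalSpace X] (k : ℕ) : Prop :=
  ∃ U : Fin (k + 1) → Set X, (∀ i, IsOpen (U i)) ∧ (⋃ i, U i) = Set.univ ∧
    ∀ i, ContractibleIn (U i)

section Deformation

variable {X : Type*} [TopologicalSpace X] {A B : Set X}

lemma exists_continuous_eq_one_eventually_eq_zero [NormalSpace X] (hA : IsOpen A) (hB : IsOpen B)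
    (hAB : A ∪ B = Set.univ) :
    ∃ v : C(X, ℝ), (∀ x, 0 ≤ v x) ∧ (∀ x ∉ A, v x = 1) ∧ ∀ x ∉ B, ∀ᶠ y in 𝓝 x, v y = 0 := by
  have hdisj : Disjoint Bᶜ Aᶜ := by
    rwa [Set.disjoint_compl_right_iff_subset, Set.compl_subset_iff_union, Set.union_comm]
  obtain ⟨u, hu0, hu1, -⟩ :=
    exists_continuous_zero_one_of_isClosed hB.isClosed_compl hA.isClosed_compl hdisj
  refine ⟨⟨fun x ↦ max 0 (2 * u x - 1), by fun_prop⟩, fun x ↦ le_max_left _ _, fun x hx ↦ ?_,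
    fun x hx ↦ ?_⟩
  · have hux : u x = 1 := hu1 hx
    norm_num [hux]
  · have hux : u x < 1 / 2 := by
      rw [hu0 (show x ∈ Bᶜ from hx)]
      norm_num
    filter_upwards [u.continuous.continuousAt.eventually (gt_mem_nhds hux)] with y hy
    exact max_eq_left (by linarith)

theorem ContractibleIn.exists_deformation [NormalSpace X] (hBc : ContractibleIn B) (hA : IsOpen A)
    (hB : IsOpen B) (hAB : A ∪ B = Set.univ) :
    ∃ (R : ℝ × X → X) (x₀ : X), Continuous R ∧ (∀ τ ≤ 0, ∀ x, R (τ, x) = x₀) ∧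
      ∀ τ ≥ 1, ∀ x ∉ A, R (τ, x) = x := by
  classical
  obtain ⟨x₀, ⟨F⟩⟩ := hBc
  obtain ⟨v, hv0, hvA, hvB⟩ := exists_continuous_eq_one_eventually_eq_zero hA hB hAB
  let time : ℝ → unitInterval := fun s ↦ Set.projIcc 0 1 zero_le_one (1 - s)
  have htime : Continuous time := continuous_projIcc.comp (by fun_prop)
  let R : ℝ × X → X := fun z ↦ if h : z.2 ∈ B then F (time (z.1 * v z.2), ⟨z.2, h⟩) else x₀
  have hR : ∀ z, z.1 * v z.2 ≤ 0 → R z = x₀ := by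
    intro z hz
    have h1 : time (z.1 * v z.2) = 1 := Set.projIcc_of_right_le _ (by linarith)
    simp [R, h1]
  refine ⟨R, x₀, continuous_iff_continuousAt.2 fun z ↦ ?_,
    fun τ hτ x ↦ hR _ (mul_nonpos_of_nonpos_of_nonneg hτ (hv0 x)), fun τ hτ x hx ↦ ?_⟩
  · by_cases hz : z.2 ∈ B
    · have hcont : ContinuousOn R (Prod.snd ⁻¹' B) := by
        rw [continuousOn_iff_continuous_domRestrict]
        have hFR : (Prod.snd ⁻¹' B).domRestrict R =
            fun z ↦ F (time (z.1.1 * v z.1.2), ⟨z.1.2, z.2⟩) := funext fun z ↦ dif_pos z.2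
        rw [hFR]
        fun_prop
      exact hcont.continuousAt ((hB.preimage continuous_snd).mem_nhds hz)
    · have hzero : ∀ᶠ z' in 𝓝 z, v z'.2 = 0 := continuous_snd.continuousAt.eventually (hvB _ hz)
      refine continuousAt_const.congr (f := fun _ ↦ x₀) ?_
      filter_upwards [hzero] with z' hz'
      exact (hR z' (by simp [hz'])).symm
  · have hxB : x ∈ B := ((Set.mem_union _ _ _).1 (hAB ▸ Set.mem_univ x)).resolve_left hx
    have h0 : time (τ * v x) = 0 :=
      Set.projIcc_of_le_left _ (by rw [hvA x hx]; linarith)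
    simp [R, hxB, h0]

end Deformation

section Covering

variable {W Y L G : Type*} [TopologicalSpace W] [TopologicalSpace Y] [TopologicalSpace L]
  [AddGroup G] [AddAction G Y] {π : Y → L}

lemma liftHomotopy_vadd {V : Type*} [TopologicalSpace V] (hπ : IsAddQuotientCoveringMap π G)
    (H : C(unitInterval × V, L)) (f : C(V, Y)) (hf : ∀ a, H (0, a) = π (f a)) {a a' : V} {c : G}
    (hH : ∀ t, H (t, a') = H (t, a)) (hc : f a' = c +ᵥ f a) (t : unitInterval) :
    hπ.isCoveringMap.liftHomotopy H f hf (t, a') =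
      c +ᵥ hπ.isCoveringMap.liftHomotopy H f hf (t, a) := by
  have := hπ.toContinuousConstVAdd
  have cov := hπ.isCoveringMap
  refine (congrFun ((cov.eq_liftPath_iff (γ := H.comp <| (ContinuousMap.id unitInterval).prodMk <|
    .const unitInterval a') (e := f a') (hf a')
    (Γ := fun t ↦ c +ᵥ cov.liftHomotopy H f hf (t, a))).2 ⟨?_, ?_, ?_⟩) t).symm
  · exact Continuous.const_vadd (by fun_prop) c
  · funext t
    have hlift : π (cov.liftHomotopy H f hf (t, a)) = H (t, a) :=
      congrFun (cov.liftHomotopy_lifts H f hf) (t, a)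
    simp only [Function.comp_apply, hπ.map_vadd, hlift]
    exact (hH t).symm
  · rw [cov.liftHomotopy_zero, hc]

lemma ContractibleIn.exists_equivariant_map {U : Set (W × L)} (hUc : ContractibleIn U)
    (hU : IsOpen U) (hπ : IsAddQuotientCoveringMap π G) :
    ∃ g : W × Y → Y, (∀ x y (c : G), g (x, c +ᵥ y) = c +ᵥ g (x, y)) ∧
      ∀ p, (p.1, π p.2) ∈ U → ∀ᶠ p' in 𝓝 p, g p' = g p := by
  classical
  obtain ⟨pt, ⟨F⟩⟩ := hUc
  have cov := hπ.isCoveringMap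
  have hπc : Continuous π := cov.continuous
  set V : Set (W × Y) := {p | (p.1, π p.2) ∈ U} with hV
  have hVo : IsOpen V := hU.preimage (by fun_prop)
  let H : C(unitInterval × V, L) :=
    ⟨fun z ↦ (F (z.1, ⟨(z.2.1.1, π z.2.1.2), z.2.2⟩)).2, by fun_prop⟩
  let f : C(V, Y) := ⟨fun a ↦ a.1.2, by fun_prop⟩
  have hf : ∀ a, H (0, a) = π (f a) := fun a ↦ by simp [H, f]
  let lift := cov.liftHomotopy H f hf
  have hend : ∀ a, π (lift (1, a)) = pt.2 := fun a ↦
    (congrFun (cov.liftHomotopy_lifts H f hf) (1, a)).trans (by simp [H])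
  refine ⟨fun p ↦ if h : p ∈ V then lift (1, ⟨p, h⟩) else p.2, fun x y c ↦ ?_, fun p hp ↦ ?_⟩
  · by_cases h : (x, y) ∈ V
    · have h' : (x, c +ᵥ y) ∈ V := by simpa [hV, hπ.map_vadd] using h
      simp only [dif_pos h, dif_pos h']
      exact liftHomotopy_vadd hπ H f hf (by simp [H, hπ.map_vadd]) rfl 1
    · have h' : (x, c +ᵥ y) ∉ V := by simpa [hV, hπ.map_vadd] using h
      simp only [dif_neg h, dif_neg h']
  · have hpV : p ∈ V := hp
    obtain ⟨N, hN, hpN, hinj⟩ := cov.isLocalHomeomorph.isLocallyInjective (lift (1, ⟨p, hpV⟩))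
    have hcont : Continuous fun a : V ↦ lift (1, a) := by fun_prop
    have hnear : ∀ᶠ a in 𝓝 (⟨p, hpV⟩ : V), lift (1, a) ∈ N :=
      hcont.continuousAt.eventually (hN.mem_nhds hpN)
    rw [← hVo.isOpenEmbedding_subtypeVal.map_nhds_eq ⟨p, hpV⟩, Filter.eventually_map]
    filter_upwards [hnear] with a ha
    simp only [dif_pos hpV, dif_pos a.2]
    exact hinj ha hpN ((hend _).trans (hend _).symm)

theorem ContractibleIn.exists_equivariant_phase {U : Set (W × L)} (hUc : ContractibleIn U)
    (hU : IsOpen U) (hπ : IsAddQuotientCoveringMap π G) :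
    ∃ T : W × Y → G, (∀ x y (c : G), T (x, c +ᵥ y) = c + T (x, y)) ∧
      ∀ p, (p.1, π p.2) ∈ U → ∀ᶠ p' in 𝓝 p, T p' = T p := by
  have := hπ.isCancelVAdd
  obtain ⟨g, hg, hgU⟩ := hUc.exists_equivariant_map hU hπ
  have hphase : ∀ y : Y, ∃ c : G, c +ᵥ Function.surjInv hπ.surjective (π y) = y := fun y ↦
    hπ.apply_eq_iff_mem_orbit.1 (Function.surjInv_eq hπ.surjective (π y)).symm
  choose phase hphase using hphase
  refine ⟨phase ∘ g, fun x y c ↦ ?_, fun p hp ↦ (hgU p hp).mono fun p' h ↦ congrArg phase h⟩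
  refine IsCancelVAdd.right_cancel _ _ (Function.surjInv hπ.surjective (π (g (x, y)))) ?_
  have hmove := hphase (c +ᵥ g (x, y))
  rw [hπ.map_vadd] at hmove
  simp only [Function.comp_apply, hg, hmove, add_vadd, hphase]

end Covering

/-! ### The universal covering of a lens space -/

/-- The unit sphere of a normed space, as a type. -/
abbrev UnitSphere (E : Type*) [NormedAddCommGroup E] : Type _ := Metric.sphere (0 : E) 1

/-- The unit sphere of `ℝ^{m+1}`. -/
abbrev RealSphere (m : ℕ) : Type := UnitSphere (EuclideanSpace ℝ (Fin (m + 1)))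

/-- The unit sphere of `ℂ^k`. -/
abbrev ComplexSphere (k : ℕ) : Type := UnitSphere (EuclideanSpace ℂ (Fin k))

section RadialProjection

variable {V : Type*} [NormedAddCommGroup V] [NormedSpace ℝ V]

open Classical in
/-- Radial projection to the unit sphere, with the prescribed value `x₀` at the origin. -/
noncomputable def toUnitSphere (x₀ : UnitSphere V) (v : V) : UnitSphere V :=
  if h : v = 0 then x₀ else ⟨NormedSpace.normalize v, by simp [h]⟩

lemma coe_toUnitSphere (x₀ : UnitSphere V) {v : V} (hv : v ≠ 0) :
    (toUnitSphere x₀ v : V) = NormedSpace.normalize v := by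
  rw [toUnitSphere, dif_neg hv]

lemma continuousAt_toUnitSphere (x₀ : UnitSphere V) {v : V} (hv : v ≠ 0) :
    ContinuousAt (toUnitSphere x₀) v := by
  rw [Topology.IsInducing.subtypeVal.continuousAt_iff]
  have hnorm : ContinuousAt (fun v : V ↦ ‖v‖⁻¹ • v) v := by
    have := norm_ne_zero_iff.2 hv
    fun_prop (disch := assumption)
  refine hnorm.congr ?_
  filter_upwards [isOpen_ne.mem_nhds hv] with w hw using (coe_toUnitSphere x₀ hw).symm

lemma toUnitSphere_coe (x₀ x : UnitSphere V) : toUnitSphere x₀ x = x := by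
  refine Subtype.ext ?_
  rw [coe_toUnitSphere x₀ (ne_zero_of_mem_unit_sphere x),
    NormedSpace.normalize_eq_self_of_norm_eq_one (norm_eq_of_mem_sphere x)]

end RadialProjection

namespace LensSpace

variable {q k : ℕ} {ℓ : Fin k → ℤ}

variable (q ℓ) in
/-- The projection from the sphere to the lens space. -/
def mk (y : ComplexSphere k) : LensSpace q k ℓ := Quot.mk _ y

lemma isQuotientMap_mk : Topology.IsQuotientMap (mk q ℓ) := isQuotientMap_quot_mk

lemma continuous_mk : Continuous (mk q ℓ) := isQuotientMap_mk.continuous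

instance : CompactSpace (LensSpace q k ℓ) := Quot.compactSpace

variable [NeZero q]

variable (ℓ) in
/-- The restriction of `rotate` to the unit sphere. -/
noncomputable def rotateSphere (c : ZMod q) (y : ComplexSphere k) :
    ComplexSphere k :=
  ⟨rotate ℓ c y, by simp⟩

lemma coe_rotateSphere (c : ZMod q) (y : ComplexSphere k) :
    (rotateSphere ℓ c y : EuclideanSpace ℂ (Fin k)) = rotate ℓ c y := rfl

variable (ℓ) in
/-- The deck transformations of the covering of the lens space by the sphere. They depend on `ℓ`,
hence cannot be a global instance on the sphere. -/
@[reducible]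
noncomputable def addActionSphere : AddAction (ZMod q) (ComplexSphere k) where
  vadd := rotateSphere ℓ
  zero_vadd y := Subtype.ext (rotate_zero ℓ y.1)
  add_vadd c c' y := Subtype.ext (rotate_rotate ℓ c c' y.1).symm

lemma continuous_rotateSphere (c : ZMod q) : Continuous (rotateSphere ℓ c) :=
  ((rotate ℓ c).continuous.comp continuous_subtype_val).subtype_mk _

lemma toUnitSphere_rotate (y₀ : ComplexSphere k) (c : ZMod q)
    {b : EuclideanSpace ℂ (Fin k)} (hb : b ≠ 0) :
    toUnitSphere y₀ (rotate ℓ c b) = rotateSphere ℓ c (toUnitSphere y₀ b) := by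
  have hb' : rotate ℓ c b ≠ 0 := (map_ne_zero_iff _ (rotate ℓ c).injective).2 hb
  refine Subtype.ext ?_
  simp [rotateSphere, coe_toUnitSphere, hb, hb', NormedSpace.normalize]

lemma lensRel_iff {y y' : ComplexSphere k} :
    lensRel q k ℓ y y' ↔ ∃ c : ZMod q, rotateSphere ℓ c y = y' := by
  have hchar (z : ℤ) (j : Fin k) : (ZMod.stdAddChar ((z : ZMod q) * (ℓ j : ZMod q)) : ℂ) =
      Complex.exp (2 * Real.pi * Complex.I * z * ℓ j / q) := by
    rw [← Int.cast_mul, ZMod.stdAddChar_coe, Int.cast_mul, ← mul_assoc]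
  rw [(ZMod.intCast_surjective).exists]
  simp [lensRel, Subtype.ext_iff, PiLp.ext_iff, rotateSphere, hchar, eq_comm]

lemma mk_eq_mk_iff {y y' : ComplexSphere k} :
    mk q ℓ y = mk q ℓ y' ↔ ∃ c : ZMod q, rotateSphere ℓ c y' = y := by
  let := addActionSphere (q := q) ℓ
  have hequiv : Equivalence (lensRel q k ℓ) := by
    refine ⟨fun y ↦ lensRel_iff.2 ⟨0, (addActionSphere ℓ).zero_vadd y⟩, fun h ↦ ?_,
      fun h h' ↦ ?_⟩
    · obtain ⟨c, rfl⟩ := lensRel_iff.1 h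
      exact lensRel_iff.2 ⟨-c, neg_vadd_vadd c _⟩
    · obtain ⟨c, rfl⟩ := lensRel_iff.1 h
      obtain ⟨c', rfl⟩ := lensRel_iff.1 h'
      exact lensRel_iff.2 ⟨c' + c, add_vadd c' c _⟩
  calc mk q ℓ y = mk q ℓ y' ↔ lensRel q k ℓ y y' := Quot.eq.trans hequiv.eqvGen_iff
    _ ↔ lensRel q k ℓ y' y := ⟨hequiv.symm, hequiv.symm⟩
    _ ↔ _ := lensRel_iff

lemma rotateSphere_left_injective (hℓ : ∀ j, IsCoprime (ℓ j) (q : ℤ))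
    (y : ComplexSphere k) :
    Function.Injective fun c : ZMod q ↦ rotateSphere ℓ c y := by
  intro c c' h
  obtain ⟨j, hj⟩ : ∃ j, y.1 j ≠ 0 := by
    by_contra! hy
    exact ne_zero_of_mem_unit_sphere y (PiLp.ext hy)
  have hchar : ZMod.stdAddChar (c * (ℓ j : ZMod q)) = ZMod.stdAddChar (c' * (ℓ j : ZMod q)) :=
    mul_right_cancel₀ hj (congrArg (fun z ↦ z.1 j) h)
  have hunit : IsUnit (ℓ j : ZMod q) := by
    rw [ZMod.coe_int_isUnit_iff_isCoprime]
    exact (hℓ j).symm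
  exact hunit.mul_right_cancel (ZMod.injective_stdAddChar hchar)

theorem isAddQuotientCoveringMap_mk (hℓ : ∀ j, IsCoprime (ℓ j) (q : ℤ)) :
    letI := addActionSphere (q := q) ℓ
    IsAddQuotientCoveringMap (mk q ℓ) (ZMod q) := by
  let := addActionSphere (q := q) ℓ
  have : ContinuousConstVAdd (ZMod q) (ComplexSphere k) :=
    ⟨continuous_rotateSphere⟩
  have : IsCancelVAdd (ZMod q) (ComplexSphere k) :=
    { left_cancel' := fun c _ _ h ↦ vadd_left_cancel c h
      right_cancel' := fun _ _ y h ↦ rotateSphere_left_injective hℓ y h }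
  exact isQuotientMap_mk.isAddQuotientCoveringMap_of_properlyDiscontinuousVAdd mk_eq_mk_iff

lemma isOpenQuotientMap_mk (hℓ : ∀ j, IsCoprime (ℓ j) (q : ℤ)) : IsOpenQuotientMap (mk q ℓ) := by
  let := addActionSphere (q := q) ℓ
  exact (isAddQuotientCoveringMap_mk hℓ).isOpenQuotientMap

lemma t2Space (hℓ : ∀ j, IsCoprime (ℓ j) (q : ℤ)) : T2Space (LensSpace q k ℓ) := by
  rw [t2Space_iff_of_isOpenQuotientMap (isOpenQuotientMap_mk hℓ)]
  simp only [mk_eq_mk_iff, Set.ofPred_exists]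
  exact isClosed_iUnion_of_finite fun c ↦
    isClosed_eq ((continuous_rotateSphere c).comp continuous_snd) continuous_fst

end LensSpace

/-! ### The lower bound -/

section JoinWeight

variable {V E : Type*} [NormedAddCommGroup V] [NormedAddCommGroup E] {p : V × E}

/-- The coordinate on the join of the unit spheres of `V` and `E`, viewed as the quotient of
`V × E` minus the origin by positive scalars, that is `1` on the sphere of `V` and `0` on the
sphere of `E`. -/
noncomputable def joinWeight (p : V × E) : ℝ := ‖p.1‖ / (‖p.1‖ + ‖p.2‖)

lemma joinWeight_of_fst_eq_zero (h : p.1 = 0) : joinWeight p = 0 := by simp [joinWeight, h]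

lemma joinWeight_of_snd_eq_zero (h₁ : p.1 ≠ 0) (h₂ : p.2 = 0) : joinWeight p = 1 := by
  simp [joinWeight, h₁, h₂]

lemma continuousAt_joinWeight (hp : p ≠ 0) : ContinuousAt (joinWeight : V × E → ℝ) p := by
  refine ContinuousAt.div (by fun_prop) (by fun_prop) fun h ↦ hp ?_
  have h₁ := norm_nonneg p.1
  have h₂ := norm_nonneg p.2
  exact Prod.ext (norm_eq_zero.1 (by linarith)) (norm_eq_zero.1 (by linarith))

end JoinWeight

section JoinMap

variable {V E : Type*} [NormedAddCommGroup V] [NormedSpace ℝ V] [NormedAddCommGroup E]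
  [NormedSpace ℝ E]

/-- The two sphere coordinates of a point of the join. -/
noncomputable def joinProj (x₀ : UnitSphere V) (y₀ : UnitSphere E) (p : V × E) :
    UnitSphere V × UnitSphere E :=
  (toUnitSphere x₀ p.1, toUnitSphere y₀ p.2)

/-- The map from the join of two unit spheres to `V` that runs through `R` while the join coordinate
is between `1/4` and `1/2` and then moves linearly to the projection. -/
noncomputable def joinMap (x₀ : UnitSphere V) (y₀ : UnitSphere E)
    (R : ℝ × UnitSphere V × UnitSphere E → UnitSphere V) (p : V × E) : V :=
  AffineMap.lineMap (R (4 * joinWeight p - 1, joinProj x₀ y₀ p) : V) (toUnitSphere x₀ p.1 : V)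
    (max 0 (min 1 (4 * joinWeight p - 2)))

variable {x₀ : UnitSphere V} {y₀ : UnitSphere E} {p : V × E}

lemma continuousAt_joinProj (h₁ : p.1 ≠ 0) (h₂ : p.2 ≠ 0) : ContinuousAt (joinProj x₀ y₀) p :=
  ((continuousAt_toUnitSphere x₀ h₁).comp continuousAt_fst).prodMk
    ((continuousAt_toUnitSphere y₀ h₂).comp continuousAt_snd)

variable {R : ℝ × UnitSphere V × UnitSphere E → UnitSphere V}

lemma joinMap_of_joinWeight_le (h : joinWeight p ≤ 1 / 2) :
    joinMap x₀ y₀ R p = R (4 * joinWeight p - 1, joinProj x₀ y₀ p) := by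
  rw [joinMap, max_eq_left ((min_le_right _ _).trans (by linarith)), AffineMap.lineMap_apply_zero]

lemma joinMap_of_le_joinWeight (h : 3 / 4 ≤ joinWeight p) :
    joinMap x₀ y₀ R p = toUnitSphere x₀ p.1 := by
  rw [joinMap, min_eq_left (by linarith), max_eq_right zero_le_one, AffineMap.lineMap_apply_one]

variable {c₀ : UnitSphere V} (hR₀ : ∀ τ ≤ 0, ∀ z, R (τ, z) = c₀)
include hR₀

lemma joinMap_of_joinWeight_le_quarter (h : joinWeight p ≤ 1 / 4) : joinMap x₀ y₀ R p = c₀ := by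
  rw [joinMap_of_joinWeight_le (by linarith), hR₀ _ (by linarith)]

lemma continuousAt_joinMap (hR : Continuous R) (hp : p ≠ 0) :
    ContinuousAt (joinMap x₀ y₀ R) p := by
  have hweight := continuousAt_joinWeight hp
  by_cases h₁ : p.1 = 0
  · have hlt : joinWeight p < 1 / 4 := by norm_num [joinWeight_of_fst_eq_zero h₁]
    refine (continuousAt_const (y := (c₀ : V))).congr ?_
    filter_upwards [hweight.eventually (gt_mem_nhds hlt)] with p' h
    exact (joinMap_of_joinWeight_le_quarter hR₀ h.le).symm
  have hfst : ContinuousAt (fun p : V × E ↦ (toUnitSphere x₀ p.1 : V)) p :=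
    continuous_subtype_val.continuousAt.comp
      ((continuousAt_toUnitSphere x₀ h₁).comp continuousAt_fst)
  by_cases h₂ : p.2 = 0
  · have hlt : 3 / 4 < joinWeight p := by norm_num [joinWeight_of_snd_eq_zero h₁ h₂]
    refine hfst.congr ?_
    filter_upwards [hweight.eventually (lt_mem_nhds hlt)] with p' h
    exact (joinMap_of_le_joinWeight h.le).symm
  · have hproj := continuousAt_joinProj (x₀ := x₀) (y₀ := y₀) h₁ h₂
    have hRp : ContinuousAt (fun p ↦ (R (4 * joinWeight p - 1, joinProj x₀ y₀ p) : V)) p :=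
      (continuous_subtype_val.comp hR).continuousAt.comp
        (f := fun p ↦ (4 * joinWeight p - 1, joinProj x₀ y₀ p)) (by fun_prop)
    exact hRp.lineMap hfst (by fun_prop)

lemma ne_zero_of_joinMap_eq_zero {C : Set (UnitSphere V × UnitSphere E)}
    (hR₁ : ∀ τ ≥ 1, ∀ z ∈ C, R (τ, z) = z.1) (h : joinMap x₀ y₀ R p = 0) :
    p.1 ≠ 0 ∧ p.2 ≠ 0 ∧ joinProj x₀ y₀ p ∉ C := by
  have h₁ : p.1 ≠ 0 := fun h₁ ↦ ne_zero_of_mem_unit_sphere c₀ <|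
    (joinMap_of_joinWeight_le_quarter hR₀ (by norm_num [joinWeight_of_fst_eq_zero h₁])).symm.trans h
  refine ⟨h₁, fun h₂ ↦ ne_zero_of_mem_unit_sphere (toUnitSphere x₀ p.1) ?_, fun hC ↦ ?_⟩
  · rw [joinMap_of_le_joinWeight (by norm_num [joinWeight_of_snd_eq_zero h₁ h₂])] at h
    exact h
  · obtain hle | hle := le_total (joinWeight p) (1 / 2)
    · rw [joinMap_of_joinWeight_le hle] at h
      exact ne_zero_of_mem_unit_sphere _ h
    · rw [joinMap, hR₁ _ (by linarith) _ hC, joinProj, AffineMap.lineMap_same_apply] at h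
      exact ne_zero_of_mem_unit_sphere _ h

end JoinMap

namespace Sperner

variable {m : ℕ}

lemma exists_coord_pos {a : EuclideanSpace ℝ (Fin (m + 1))} (ha : a ≠ 0) :
    ∃ j ≤ m + 1, 0 < coord m j a := by
  by_contra! h
  have hle : ∀ i, a i ≤ 0 := fun i ↦ by
    simpa [coord, i.is_le] using h i i.2.le
  have hsum : 0 ≤ ∑ i, a i := by simpa [coord] using h (m + 1) le_rfl
  refine ha (PiLp.ext fun i ↦ ?_)
  exact (Finset.sum_eq_zero_iff_of_nonpos fun i _ ↦ hle i).1
    (le_antisymm (Finset.sum_nonpos fun i _ ↦ hle i) hsum) i (Finset.mem_univ i)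

open Classical in
/-- A Sperner label of a vector: the index of a positive coordinate, with the junk value `0` at the
origin. -/
noncomputable def label (a : EuclideanSpace ℝ (Fin (m + 1))) : ℕ :=
  if h : ∃ j ≤ m + 1, 0 < coord m j a then h.choose else 0

lemma label_le (a : EuclideanSpace ℝ (Fin (m + 1))) : label a ≤ m + 1 := by
  rw [label]
  split_ifs with h
  exacts [h.choose_spec.1, Nat.zero_le _]

lemma coord_label_pos {a : EuclideanSpace ℝ (Fin (m + 1))} (ha : a ≠ 0) :
    0 < coord m (label a) a := by
  rw [label, dif_pos (exists_coord_pos ha)]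
  exact (exists_coord_pos ha).choose_spec.2

lemma exists_eventually_label_ne {X : Type*} [TopologicalSpace X]
    {φ : X → EuclideanSpace ℝ (Fin (m + 1))} {x : X} (hφ : ContinuousAt φ x) (hx : φ x ≠ 0) :
    ∃ j ≤ m + 1, ∀ᶠ x' in 𝓝 x, label (φ x') ≠ j := by
  obtain ⟨j, hj, hpos⟩ := exists_coord_pos (neg_ne_zero.2 hx)
  have hneg : coord m j (φ x) < 0 := by simpa using hpos
  have hcont : ContinuousAt (fun x' ↦ coord m j (φ x')) x :=
    (coord m j).continuous.continuousAt.comp hφ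
  refine ⟨j, hj, ?_⟩
  filter_upwards [hcont.eventually (gt_mem_nhds hneg)] with x' hx' h
  have hne : φ x' ≠ 0 := fun h0 ↦ by simp [h0] at hx'
  exact (coord_label_pos hne).not_gt (h ▸ hx')

end Sperner

namespace LensSpace

variable {q m k : ℕ} [NeZero q] {ℓ : Fin k → ℤ}

lemma joinWeight_rotateJoin (c : ZMod q) (p : JoinSpace m k) :
    joinWeight (rotateJoin m ℓ c p) = joinWeight p := by
  simp [joinWeight]

lemma joinProj_rotateJoin (x₀ : RealSphere m)
    (y₀ : ComplexSphere k) (c : ZMod q) {p : JoinSpace m k} (hp : p.2 ≠ 0) :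
    joinProj x₀ y₀ (rotateJoin m ℓ c p) =
      ((joinProj x₀ y₀ p).1, rotateSphere ℓ c (joinProj x₀ y₀ p).2) := by
  simp [joinProj, toUnitSphere_rotate y₀ c hp]

lemma joinMap_rotateJoin {x₀ : RealSphere m} {y₀ : ComplexSphere k}
    {R : ℝ × RealSphere m × ComplexSphere k → RealSphere m}
    (hR : ∀ (c : ZMod q) τ x y, R (τ, x, rotateSphere ℓ c y) = R (τ, x, y)) (c : ZMod q)
    (p : JoinSpace m k) :
    joinMap x₀ y₀ R (rotateJoin m ℓ c p) = joinMap x₀ y₀ R p := by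
  by_cases hp : p.2 = 0
  · rw [show rotateJoin m ℓ c p = p from Prod.ext rfl (by simp [hp])]
  · simp only [joinMap, joinWeight_rotateJoin, joinProj_rotateJoin x₀ y₀ c hp, hR]
    simp

theorem exists_not_eventually_phase_eq {K : ℕ} (hk : k = K + 1) (hq : 2 ≤ q)
    (hℓ : ∀ j, IsCoprime (ℓ j) (q : ℤ)) {R : ℝ × RealSphere m × ComplexSphere k → RealSphere m}
    {c₀ : RealSphere m} (hR : Continuous R) (hR₀ : ∀ τ ≤ 0, ∀ z, R (τ, z) = c₀)
    (hRℓ : ∀ (c : ZMod q) τ x y, R (τ, x, rotateSphere ℓ c y) = R (τ, x, y))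
    {T : Fin (2 * K + 1) → RealSphere m × ComplexSphere k → ZMod q}
    (hT : ∀ i x y c, T i (x, rotateSphere ℓ c y) = c + T i (x, y)) :
    ∃ z, (∃ τ ≥ 1, R (τ, z) ≠ z.1) ∧ ∀ i, ¬ ∀ᶠ z' in 𝓝 z, T i z' = T i z := by
  by_contra! hz
  let x₀ : RealSphere m := ⟨EuclideanSpace.single 0 1, by simp⟩
  let y₀ : ComplexSphere k := ⟨EuclideanSpace.single ⟨0, by omega⟩ 1, by simp⟩
  set φ := joinMap x₀ y₀ R with hφ
  obtain ⟨p, hp, hsmall⟩ := exists_ne_zero_forall_not_isSmallSet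
    (d := fun p ↦ Sperner.label (φ p)) (t := fun i p ↦ T (Fin.ofNat _ i) (joinProj x₀ y₀ p))
    (fun p ↦ Sperner.label_le _) (fun c p ↦ congrArg _ (joinMap_rotateJoin hRℓ c p))
    (fun i c p hp ↦ by simp only [joinProj_rotateJoin x₀ y₀ c hp, hT, add_comm c]) hk hq hℓ
    fun a ha ↦ by
      have hφa : φ (a, 0) = NormedSpace.normalize a := by
        rw [hφ, joinMap_of_le_joinWeight (by norm_num [joinWeight_of_snd_eq_zero, ha]),
          coe_toUnitSphere x₀ ha]
      have hlabel := Sperner.coord_label_pos (a := φ (a, 0)) (by simpa [hφa] using ha)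
      have : 0 < ‖a‖⁻¹ * Sperner.coord m (Sperner.label (φ (a, 0))) a := by
        simpa only [hφa, NormedSpace.normalize, map_smul, smul_eq_mul] using hlabel
      exact pos_of_mul_pos_right this (by positivity)
  by_cases hφp : φ p = 0
  · obtain ⟨h₁, h₂, hRp⟩ := ne_zero_of_joinMap_eq_zero (C := {z | ∀ τ ≥ 1, R (τ, z) = z.1}) hR₀
      (fun τ hτ z hz ↦ hz τ hτ) hφp
    have hmove : ∃ τ ≥ 1, R (τ, joinProj x₀ y₀ p) ≠ (joinProj x₀ y₀ p).1 := by simpa using hRp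
    obtain ⟨i, hi⟩ := hz _ hmove
    have hnear := ((continuousAt_joinProj h₁ h₂).eventually hi).and
      (continuous_snd.continuousAt.eventually (isOpen_ne.mem_nhds h₂))
    exact hsmall _ hnear (.inr ⟨fun p h ↦ h.2, i, i.2, _, fun p h ↦ by simpa using h.1⟩)
  · obtain ⟨j, hj, hne⟩ := Sperner.exists_eventually_label_ne
      (continuousAt_joinMap hR₀ hR hp) hφp
    exact hsmall _ hne (.inl ⟨j, hj, fun p h ↦ h⟩)

theorem not_hasCategoricalCover_prod {K : ℕ} (hk : k = K + 1) (hq : 2 ≤ q)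
    (hℓ : ∀ j, IsCoprime (ℓ j) (q : ℤ)) :
    ¬ HasCategoricalCover (RealSphere m × LensSpace q k ℓ) (2 * K + 1) := by
  rintro ⟨U, hU, hcover, hUc⟩
  let := addActionSphere (q := q) ℓ
  have := t2Space hℓ
  have hcover' : (⋃ i : Fin (2 * K + 1), U i.castSucc) ∪ U (Fin.last _) = Set.univ := by
    rw [← hcover]
    ext z
    simp [Fin.exists_fin_succ']
  obtain ⟨R, z₀, hR, hR₀, hR₁⟩ := (hUc (Fin.last _)).exists_deformation
    (isOpen_iUnion fun i ↦ hU _) (hU _) hcover'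
  choose T hT hTU using fun i : Fin (2 * K + 1) ↦
    (hUc i.castSucc).exists_equivariant_phase (hU _) (isAddQuotientCoveringMap_mk hℓ)
  have hmk := continuous_mk (q := q) (ℓ := ℓ)
  obtain ⟨z, ⟨τ, hτ, hmove⟩, hz⟩ := exists_not_eventually_phase_eq
    (R := fun z ↦ (R (z.1, z.2.1, mk q ℓ z.2.2)).1) (c₀ := z₀.1) hk hq hℓ (by fun_prop)
    (fun τ hτ z ↦ by simp only [hR₀ τ hτ])
    (fun c τ x y ↦ by simp only [mk_eq_mk_iff.2 ⟨c, rfl⟩]) hT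
  refine hmove (congrArg Prod.fst (hR₁ τ hτ (z.1, mk q ℓ z.2) fun hzU ↦ ?_))
  obtain ⟨i, hi⟩ := Set.mem_iUnion.1 hzU
  exact hz i (hTU i z hi)

end LensSpace

/-! ### The upper bound -/

/-- A set contracts to the point `x₀` in the ambient space; this refines `ContractibleIn` by
recording the constant at which the homotopy ends. -/
def ContractsTo {X : Type*} [TopologicalSpace X] (U : Set X) (x₀ : X) : Prop :=
  (⟨Subtype.val, continuous_subtype_val⟩ : C(U, X)).Homotopic (.const U x₀)

namespace ContractsTo

variable {X Y : Type*} [TopologicalSpace X] [TopologicalSpace Y] {U U' : Set X} {x₀ : X}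

lemma of_continuousOn {F : unitInterval × X → X} (hF : ContinuousOn F (Prod.snd ⁻¹' U))
    (hF₀ : ∀ x ∈ U, F (0, x) = x) (hF₁ : ∀ x ∈ U, F (1, x) = x₀) : ContractsTo U x₀ :=
  ⟨⟨⟨fun z ↦ F (z.1, z.2.1), hF.comp_continuous (by fun_prop) fun z ↦ z.2.2⟩,
    fun x ↦ hF₀ x x.2, fun x ↦ hF₁ x x.2⟩⟩

lemma exists_continuousOn (h : ContractsTo U x₀) :
    ∃ F : unitInterval × X → X, ContinuousOn F (Prod.snd ⁻¹' U) ∧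
      (∀ x ∈ U, F (0, x) = x) ∧ ∀ x ∈ U, F (1, x) = x₀ := by
  classical
  obtain ⟨H⟩ := h
  refine ⟨fun z ↦ if h : z.2 ∈ U then H (z.1, ⟨z.2, h⟩) else x₀, ?_, fun x hx ↦ ?_,
    fun x hx ↦ ?_⟩
  · rw [continuousOn_iff_continuous_domRestrict]
    refine Continuous.congr (f := fun z ↦ H (z.1.1, ⟨z.1.2, z.2⟩)) (by fun_prop) fun z ↦ ?_
    simp [show z.1.2 ∈ U from z.2]
  · simp [hx]
  · simp [hx]

lemma mono (h : ContractsTo U x₀) (hU : U' ⊆ U) : ContractsTo U' x₀ := by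
  obtain ⟨F, hF, hF₀, hF₁⟩ := h.exists_continuousOn
  exact of_continuousOn (hF.mono (Set.preimage_mono hU)) (fun x hx ↦ hF₀ x (hU hx))
    fun x hx ↦ hF₁ x (hU hx)

lemma of_pathConnectedSpace [PathConnectedSpace X] (h : ContractsTo U x₀) (x₁ : X) :
    ContractsTo U x₁ :=
  h.trans ⟨(PathConnectedSpace.somePath x₀ x₁).toHomotopyConst⟩

lemma union (h : ContractsTo U x₀) (h' : ContractsTo U' x₀) (hU : IsOpen U) (hU' : IsOpen U')
    (hdisj : Disjoint U U') : ContractsTo (U ∪ U') x₀ := by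
  classical
  obtain ⟨F, hF, hF₀, hF₁⟩ := h.exists_continuousOn
  obtain ⟨F', hF', hF₀', hF₁'⟩ := h'.exists_continuousOn
  have hnot : ∀ x ∈ U', x ∉ U := fun x hx hx' ↦ hdisj.notMem_of_mem_left hx' hx
  refine of_continuousOn (F := fun z ↦ if z.2 ∈ U then F z else F' z) ?_ ?_ ?_
  · refine ContinuousOn.union_of_isOpen (hF.congr fun z hz ↦ if_pos hz)
      (hF'.congr fun z hz ↦ if_neg (hnot _ hz)) (hU.preimage continuous_snd)
      (hU'.preimage continuous_snd)
  · rintro x (hx | hx)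
    · simp [hx, hF₀]
    · simp [hx, hnot, hF₀']
  · rintro x (hx | hx)
    · simp [hx, hF₁]
    · simp [hx, hnot, hF₁']

lemma prod {V : Set Y} {y₀ : Y} (h : ContractsTo U x₀) (h' : ContractsTo V y₀) :
    ContractsTo (U ×ˢ V) (x₀, y₀) := by
  obtain ⟨F, hF, hF₀, hF₁⟩ := h.exists_continuousOn
  obtain ⟨F', hF', hF₀', hF₁'⟩ := h'.exists_continuousOn
  refine of_continuousOn (F := fun z ↦ (F (z.1, z.2.1), F' (z.1, z.2.2)))
    (ContinuousOn.prodMk ?_ ?_) (fun x hx ↦ Prod.ext (hF₀ _ hx.1) (hF₀' _ hx.2))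
    fun x hx ↦ Prod.ext (hF₁ _ hx.1) (hF₁' _ hx.2)
  · exact hF.comp (by fun_prop) fun z hz ↦ hz.1
  · exact hF'.comp (by fun_prop) fun z hz ↦ hz.2

end ContractsTo

/-- A nonnegative continuous function whose support contracts in the space. Categorical covers
are written as supports of such functions in order to be combined on a product. -/
structure IsContractibleWeight {X : Type*} [TopologicalSpace X] (f : X → ℝ) : Prop where
  continuous : Continuous f
  nonneg : ∀ x, 0 ≤ f x
  exists_contractsTo : ∃ x₀, ContractsTo (Function.support f) x₀

namespace IsContractibleWeight

variable {X Y : Type*} [TopologicalSpace X] [TopologicalSpace Y]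

lemma zero [Nonempty X] : IsContractibleWeight (0 : X → ℝ) where
  continuous := continuous_const
  nonneg _ := le_rfl
  exists_contractsTo := by
    obtain ⟨x₀⟩ := ‹Nonempty X›
    exact ⟨x₀, .of_continuousOn (F := Prod.snd) (by fun_prop) (by simp) (by simp)⟩

variable {α α' : X → ℝ} {β β' : Y → ℝ}

lemma exists_contractsTo_mul_lt_mul (hα : IsContractibleWeight α) (hβ : IsContractibleWeight β)
    (hα' : ∀ x, 0 ≤ α' x) (hβ' : ∀ y, 0 ≤ β' y) :
    ∃ z₀, ContractsTo {z : X × Y | α' z.1 * β' z.2 < α z.1 * β z.2} z₀ := by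
  obtain ⟨x₀, hx₀⟩ := hα.exists_contractsTo
  obtain ⟨y₀, hy₀⟩ := hβ.exists_contractsTo
  refine ⟨(x₀, y₀), (hx₀.prod hy₀).mono fun z hz ↦ ?_⟩
  have hpos : α z.1 * β z.2 ≠ 0 := ((mul_nonneg (hα' z.1) (hβ' z.2)).trans_lt hz).ne'
  exact ⟨left_ne_zero_of_mul hpos, right_ne_zero_of_mul hpos⟩

variable [PathConnectedSpace X] [PathConnectedSpace Y]

lemma contractibleIn_mul_ne_mul (hα : IsContractibleWeight α) (hβ : IsContractibleWeight β)
    (hα' : IsContractibleWeight α') (hβ' : IsContractibleWeight β') :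
    ContractibleIn {z : X × Y | α z.1 * β z.2 ≠ α' z.1 * β' z.2} := by
  have := hα.continuous
  have := hβ.continuous
  have := hα'.continuous
  have := hβ'.continuous
  obtain ⟨z₀, h⟩ := hα'.exists_contractsTo_mul_lt_mul hβ' hα.nonneg hβ.nonneg
  obtain ⟨z₁, h'⟩ := hα.exists_contractsTo_mul_lt_mul hβ hα'.nonneg hβ'.nonneg
  refine ⟨z₀, (h.union (h'.of_pathConnectedSpace z₀) (isOpen_lt (by fun_prop) (by fun_prop))
    (isOpen_lt (by fun_prop) (by fun_prop)) ?_).mono fun z hz ↦ lt_or_gt_of_ne hz⟩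
  exact Set.disjoint_left.2 fun z hz hz' ↦ lt_asymm (α := ℝ) hz hz'

lemma exists_cons_mul_ne_snoc_mul {a b : ℝ} (hab : a ≠ 0 ∨ b ≠ 0) {N : ℕ} {c : Fin N → ℝ}
    (hc : ∃ s, c s ≠ 0) :
    ∃ s : Fin (N + 1), a * (Fin.cons 0 c : Fin (N + 1) → ℝ) s ≠
      b * (Fin.snoc c 0 : Fin (N + 1) → ℝ) s := by
  by_contra! h
  obtain ⟨s, hs⟩ := hc
  by_cases hb : b = 0
  · have := h s.succ
    rw [Fin.cons_succ, hb, zero_mul] at this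
    exact hs ((mul_eq_zero.1 this).resolve_left (hab.resolve_right (not_not_intro hb)))
  · have hzero : ∀ s : Fin (N + 1), (Fin.cons 0 c : Fin (N + 1) → ℝ) s = 0 := by
      refine Fin.induction rfl fun s hs ↦ ?_
      have := h s.castSucc
      simp_all
    exact hs (hzero s.succ)

theorem hasCategoricalCover_prod {α₀ α₁ : X → ℝ} (hα₀ : IsContractibleWeight α₀)
    (hα₁ : IsContractibleWeight α₁) (hα : ∀ x, α₀ x ≠ 0 ∨ α₁ x ≠ 0) {N : ℕ} {γ : Fin N → Y → ℝ}
    (hγ : ∀ s, IsContractibleWeight (γ s)) (hex : ∀ y, ∃ s, γ s y ≠ 0) :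
    HasCategoricalCover (X × Y) N := by
  -- Here `lower s` and `upper s` are `γ_{s-1}` and `γ_s` with `γ_{-1} = γ_N = 0`. If the equality
  -- `α₀ γ_{s-1} = α₁ γ_s` held for all `s`, the zero at one end would propagate to all `γ_s`.
  let lower : Fin (N + 1) → Y → ℝ := Fin.cons 0 γ
  let upper : Fin (N + 1) → Y → ℝ := Fin.snoc γ 0
  have hlower : ∀ s, IsContractibleWeight (lower s) := Fin.cases zero hγ
  have hupper : ∀ s, IsContractibleWeight (upper s) := Fin.lastCases (by simpa [upper] using zero)
    fun s ↦ by simpa [upper] using hγ s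
  refine ⟨fun s ↦ {z | α₀ z.1 * lower s z.2 ≠ α₁ z.1 * upper s z.2}, fun s ↦ ?_,
    Set.eq_univ_of_forall fun z ↦ ?_,
    fun s ↦ hα₀.contractibleIn_mul_ne_mul (hlower s) hα₁ (hupper s)⟩
  · have := hα₀.continuous
    have := hα₁.continuous
    have := (hlower s).continuous
    have := (hupper s).continuous
    exact isOpen_ne_fun (by fun_prop) (by fun_prop)
  · obtain ⟨s, hs⟩ := exists_cons_mul_ne_snoc_mul (hα z.1) (hex z.2)
    refine Set.mem_iUnion.2 ⟨s, ?_⟩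
    convert hs using 2
    · cases s using Fin.cases <;> rfl
    · cases s using Fin.lastCases <;> simp [upper]

end IsContractibleWeight

section Sphere

variable {V : Type*} [NormedAddCommGroup V] [NormedSpace ℝ V]

lemma contractsTo_compl_neg (e : UnitSphere V) : ContractsTo {-e}ᶜ e := by
  let segment : unitInterval × UnitSphere V → V := fun z ↦ AffineMap.lineMap (z.2 : V) e (z.1 : ℝ)
  have hne : ∀ z ∈ Prod.snd ⁻¹' {-e}ᶜ, segment z ≠ 0 := by
    rintro ⟨t, x⟩ hx h
    have heq : (1 - (t : ℝ)) • (x : V) = -((t : ℝ) • (e : V)) :=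
      eq_neg_of_add_eq_zero_left ((AffineMap.lineMap_apply_module _ _ _).symm.trans h)
    have ht : 1 - (t : ℝ) = t := by
      simpa [norm_smul, abs_of_nonneg t.2.1, abs_of_nonneg (sub_nonneg.2 t.2.2)]
        using congrArg norm heq
    have ht0 : (t : ℝ) ≠ 0 := by linarith
    rw [ht, ← smul_neg] at heq
    exact hx (Subtype.ext (smul_right_injective V ht0 heq))
  have hsegment : Continuous segment := by fun_prop
  refine .of_continuousOn (F := fun z ↦ toUnitSphere e (segment z)) (fun z hz ↦ ?_)
    (fun x _ ↦ ?_) fun x _ ↦ ?_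
  · exact ((continuousAt_toUnitSphere e (hne z hz)).comp
      hsegment.continuousAt).continuousWithinAt
  · simp [segment, toUnitSphere_coe]
  · simp [segment, toUnitSphere_coe]

lemma isContractibleWeight_dist_neg (e : UnitSphere V) :
    IsContractibleWeight fun x : UnitSphere V ↦ dist x (-e) where
  continuous := by fun_prop
  nonneg _ := dist_nonneg
  exists_contractsTo := ⟨e, (contractsTo_compl_neg e).mono fun _ hx ↦ dist_ne_zero.1 hx⟩

lemma pathConnectedSpace_unitSphere (h : 1 < Module.rank ℝ V) :
    PathConnectedSpace (UnitSphere V) :=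
  isPathConnected_iff_pathConnectedSpace.1 (isPathConnected_sphere h 0 zero_le_one)

end Sphere

lemma re_cpow_natCast_inv_pos {q : ℕ} (hq : 2 ≤ q) {z : ℂ} (hz : z ∈ Complex.slitPlane) :
    0 < (z ^ ((q : ℂ)⁻¹)).re := by
  obtain ⟨harg, hz0⟩ := Complex.mem_slitPlane_iff_arg.1 hz
  have hexp : Complex.log z * (q : ℂ)⁻¹ = Complex.log z * ((q : ℝ)⁻¹ : ℝ) := by push_cast; rfl
  rw [Complex.cpow_def_of_ne_zero hz0, Complex.exp_re, hexp, Complex.im_mul_ofReal,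
    Complex.log_im]
  have hπ : |z.arg| < Real.pi := abs_lt.2 ⟨Complex.neg_pi_lt_arg z,
    (Complex.arg_le_pi z).lt_of_ne harg⟩
  have hq' : (q : ℝ)⁻¹ ≤ 2⁻¹ := inv_anti₀ two_pos (by exact_mod_cast hq)
  refine mul_pos (Real.exp_pos _) (Real.cos_pos_of_mem_Ioo (abs_lt.1 ?_))
  calc |z.arg * (q : ℝ)⁻¹| = |z.arg| * (q : ℝ)⁻¹ := by
        rw [abs_mul, abs_of_nonneg (by positivity : (0 : ℝ) ≤ (q : ℝ)⁻¹)]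
    _ ≤ |z.arg| * 2⁻¹ := by gcongr
    _ < Real.pi / 2 := by linarith

lemma mem_slitPlane_iff_re_add_norm_ne_zero {z : ℂ} : z ∈ Complex.slitPlane ↔ z.re + ‖z‖ ≠ 0 := by
  rw [Complex.mem_slitPlane_iff_not_le_zero, ← Complex.re_eq_neg_norm,
    eq_neg_iff_add_eq_zero]

namespace LensSpace

variable {q k : ℕ} {ℓ : Fin k → ℤ}

section Contraction

variable [NeZero q]

lemma contractsTo_of_equivariant (hℓ : ∀ j, IsCoprime (ℓ j) (q : ℤ)) {U : Set (LensSpace q k ℓ)}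
    (hU : IsOpen U) {l₀ : LensSpace q k ℓ} (y₀ : ComplexSphere k)
    {g : ComplexSphere k → EuclideanSpace ℂ (Fin k)} (hg : ContinuousOn g (mk q ℓ ⁻¹' U))
    (hrot : ∀ (c : ZMod q) y, g (rotateSphere ℓ c y) = rotate ℓ c (g y))
    (hseg : ∀ y, mk q ℓ y ∈ U → ∀ t : unitInterval,
      AffineMap.lineMap (y : EuclideanSpace ℂ (Fin k)) (g y) (t : ℝ) ≠ 0)
    (hend : ∀ y, mk q ℓ y ∈ U → mk q ℓ (toUnitSphere y₀ (g y)) = l₀) : ContractsTo U l₀ := by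
  let segment : unitInterval × ComplexSphere k → EuclideanSpace ℂ (Fin k) := fun z ↦
    AffineMap.lineMap (z.2 : EuclideanSpace ℂ (Fin k)) (g z.2) (z.1 : ℝ)
  let G : unitInterval × ComplexSphere k → LensSpace q k ℓ := fun z ↦
    mk q ℓ (toUnitSphere y₀ (segment z))
  have hmk := isOpenQuotientMap_mk hℓ
  let lift : LensSpace q k ℓ → ComplexSphere k := Function.surjInv hmk.surjective
  have hlift : ∀ t y, mk q ℓ y ∈ U → G (t, lift (mk q ℓ y)) = G (t, y) := by
    intro t y hy
    obtain ⟨c, hc⟩ := mk_eq_mk_iff.1 (Function.surjInv_eq hmk.surjective (mk q ℓ y))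
    have hsegment : segment (t, rotateSphere ℓ c y) = rotate ℓ c (segment (t, y)) := by
      simp [segment, hrot, AffineMap.lineMap_apply_module, coe_rotateSphere]
    simp only [G, lift, ← hc, hsegment]
    exact mk_eq_mk_iff.2 ⟨c, (toUnitSphere_rotate y₀ c (hseg y hy t)).symm⟩
  refine .of_continuousOn (F := fun z ↦ G (z.1, lift z.2)) ?_
    (hmk.surjective.forall.2 fun y hy ↦ ?_) (hmk.surjective.forall.2 fun y hy ↦ ?_)
  · rw [((IsOpenQuotientMap.id.prodMap hmk).isQuotientMap.continuousOn_isOpen_iff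
      (hU.preimage continuous_snd))]
    refine ContinuousOn.congr (f := G) (fun z hz ↦ ?_) fun z hz ↦ hlift z.1 z.2 hz
    have hgz : ContinuousAt g z.2 := hg.continuousAt ((hU.preimage continuous_mk).mem_nhds hz)
    have hsegment : ContinuousAt segment z :=
      (by fun_prop : ContinuousAt (fun z : unitInterval × ComplexSphere k ↦
        (z.2 : EuclideanSpace ℂ (Fin k))) z).lineMap (hgz.comp continuousAt_snd) (by fun_prop)
    have hto : ContinuousAt (toUnitSphere y₀) (segment z) :=
      continuousAt_toUnitSphere y₀ (hseg z.2 hz z.1)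
    exact (continuous_mk.continuousAt.comp (hto.comp hsegment)).continuousWithinAt
  · rw [hlift 0 y hy]
    simp [G, segment, toUnitSphere_coe]
  · rw [hlift 1 y hy]
    simpa [G, segment] using hend y hy

lemma exists_stdAddChar_mul_eq {a : ℤ} (ha : IsCoprime a (q : ℤ)) {w : ℂ} (hw : w ^ q = 1) :
    ∃ c : ZMod q, ZMod.stdAddChar (c * (a : ZMod q)) = w := by
  obtain ⟨i, -, rfl⟩ := (Complex.isPrimitiveRoot_exp q (NeZero.ne q)).eq_pow_of_pow_eq_one hw
  have hunit : IsUnit (a : ZMod q) := by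
    rw [ZMod.coe_int_isUnit_iff_isCoprime]
    exact ha.symm
  obtain ⟨c, hc⟩ := hunit.exists_left_inv
  refine ⟨i * c, ?_⟩
  rw [mul_assoc, hc, mul_one, ← Int.cast_natCast, ZMod.stdAddChar_coe, ← Complex.exp_nat_mul]
  congr 1
  push_cast
  ring

end Contraction

lemma pathConnectedSpace (hk : 1 ≤ k) : PathConnectedSpace (LensSpace q k ℓ) := by
  have : PathConnectedSpace (ComplexSphere k) := by
    refine pathConnectedSpace_unitSphere ?_
    rw [← Module.finrank_eq_rank, finrank_real_of_complex, finrank_euclideanSpace_fin]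
    exact_mod_cast (by lia : 1 < 2 * k)
  exact isQuotientMap_mk.surjective.pathConnectedSpace continuous_mk

variable (q) in
/-- The invariant function `ε z_j ^ q` on the sphere. The part of the lens space on which it avoids
the nonpositive reals is a contractible chart. -/
noncomputable def coordPow (ε : ℂ) (j : Fin k) (y : ComplexSphere k) : ℂ := ε * y.1 j ^ q

variable (q) in
/-- The coordinate `z_j` divided by the principal `q`-th root of `ε z_j ^ q`. It rotates as `z_j`
does, but takes only finitely many values. -/
noncomputable def coordPhase (ε : ℂ) (j : Fin k) (y : ComplexSphere k) : ℂ :=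
  y.1 j / coordPow q ε j y ^ (q : ℂ)⁻¹

variable {ε : ℂ} {j : Fin k} {y : ComplexSphere k}

lemma continuousAt_coordPhase (h : coordPow q ε j y ∈ Complex.slitPlane) :
    ContinuousAt (coordPhase q ε j) y := by
  have hpow : ContinuousAt (coordPow q ε j) y := by unfold coordPow; fun_prop
  refine ContinuousAt.div (by fun_prop) (hpow.cpow continuousAt_const h) ?_
  simp [Complex.slitPlane_ne_zero h]

variable [NeZero q]

lemma coordPow_rotateSphere (c : ZMod q) :
    coordPow q ε j (rotateSphere ℓ c y) = coordPow q ε j y := by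
  have hchar : (ZMod.stdAddChar (c * (ℓ j : ZMod q)) : ℂ) ^ q = 1 := by
    rw [← AddChar.map_nsmul_eq_pow]
    simp
  simp [coordPow, coe_rotateSphere, mul_pow, hchar]

lemma coordPhase_rotateSphere (c : ZMod q) :
    coordPhase q ε j (rotateSphere ℓ c y) =
      ZMod.stdAddChar (c * (ℓ j : ZMod q)) * coordPhase q ε j y := by
  rw [coordPhase, coordPow_rotateSphere, coe_rotateSphere, rotate_apply, mul_div_assoc, coordPhase]

lemma coordPhase_pow (h : coordPow q ε j y ≠ 0) : coordPhase q ε j y ^ q = ε⁻¹ := by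
  have hy : y.1 j ^ q ≠ 0 := right_ne_zero_of_mul h
  rw [coordPhase, div_pow, Complex.cpow_nat_inv_pow _ (NeZero.ne q), coordPow,
    div_mul_cancel_right₀ hy]

lemma lineMap_coordPhase_ne_zero (hq : 2 ≤ q) (h : coordPow q ε j y ∈ Complex.slitPlane)
    (t : unitInterval) :
    AffineMap.lineMap (y : EuclideanSpace ℂ (Fin k))
      (EuclideanSpace.single j (coordPhase q ε j y)) (t : ℝ) ≠ 0 := by
  set root := coordPow q ε j y ^ (q : ℂ)⁻¹ with hroot
  have hre : 0 < root.re := re_cpow_natCast_inv_pos hq h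
  have hroot0 : root ≠ 0 := fun h0 ↦ by simp [h0] at hre
  have hy : y.1 j = coordPhase q ε j y * root := by
    rw [coordPhase, ← hroot, div_mul_cancel₀ _ hroot0]
  have hphase : coordPhase q ε j y ≠ 0 := fun h0 ↦ by
    refine Complex.slitPlane_ne_zero h ?_
    rw [coordPow, hy, h0, zero_mul, zero_pow (NeZero.ne q), mul_zero]
  have hpos : 0 < ((1 - (t : ℝ)) • root + (t : ℝ) • (1 : ℂ)).re := by
    have hle : 0 ≤ (1 - (t : ℝ)) * root.re := mul_nonneg (sub_nonneg.2 t.2.2) hre.le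
    obtain ht | ht := t.2.1.eq_or_lt
    · simpa [← ht] using hre
    · simpa using add_pos_of_nonneg_of_pos hle ht
  intro h0
  have hcoord : coordPhase q ε j y * ((1 - (t : ℝ)) • root + (t : ℝ) • (1 : ℂ)) = 0 := by
    have := congrArg (fun b ↦ b j) h0
    simp only [AffineMap.lineMap_apply_module, PiLp.add_apply, PiLp.smul_apply, hy] at this
    simp only [PiLp.single_apply, if_true, PiLp.zero_apply, Complex.real_smul] at this ⊢
    linear_combination this
  rw [(mul_eq_zero.1 hcoord).resolve_left hphase, Complex.zero_re] at hpos
  exact hpos.false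

variable (q ℓ) in
/-- A function on the lens space whose support is the chart on which `ε z_j ^ q` avoids the
nonpositive reals. -/
noncomputable def chartWeight (ε : ℂ) (j : Fin k) : LensSpace q k ℓ → ℝ :=
  Quot.lift (fun y ↦ (coordPow q ε j y).re + ‖coordPow q ε j y‖) fun _ _ h ↦ by
    obtain ⟨c, rfl⟩ := lensRel_iff.1 h
    simp only [coordPow_rotateSphere]

lemma chartWeight_mk :
    chartWeight q ℓ ε j (mk q ℓ y) = (coordPow q ε j y).re + ‖coordPow q ε j y‖ := rfl

lemma coordPow_mem_slitPlane_iff :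
    coordPow q ε j y ∈ Complex.slitPlane ↔ mk q ℓ y ∈ Function.support (chartWeight q ℓ ε j) :=
  mem_slitPlane_iff_re_add_norm_ne_zero

lemma continuous_chartWeight : Continuous (chartWeight q ℓ ε j) := by
  refine continuous_quot_lift _ ?_
  unfold coordPow
  fun_prop

lemma mk_toUnitSphere_single_eq (hℓ : IsCoprime (ℓ j) (q : ℤ)) (y₀ : ComplexSphere k) {w w' : ℂ}
    (hw : w ≠ 0) (h : w' ^ q = w ^ q) :
    mk q ℓ (toUnitSphere y₀ (EuclideanSpace.single j w')) =
      mk q ℓ (toUnitSphere y₀ (EuclideanSpace.single j w)) := by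
  obtain ⟨c, hc⟩ := exists_stdAddChar_mul_eq hℓ (w := w' / w)
    (by rw [div_pow, h, div_self (pow_ne_zero q hw)])
  have hrotate : EuclideanSpace.single j w' = rotate ℓ c (EuclideanSpace.single j w) := by
    ext i
    obtain rfl | hi := eq_or_ne i j
    · simp [hc, hw]
    · simp [hi]
  rw [hrotate, toUnitSphere_rotate y₀ c (by simpa using hw)]
  exact mk_eq_mk_iff.2 ⟨c, rfl⟩

lemma exists_contractsTo_support_chartWeight (hq : 2 ≤ q) (hℓ : ∀ j, IsCoprime (ℓ j) (q : ℤ)) :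
    ∃ l₀, ContractsTo (Function.support (chartWeight q ℓ ε j)) l₀ := by
  let y₀ : ComplexSphere k := ⟨EuclideanSpace.single j 1, by simp⟩
  obtain ⟨w, hw⟩ := IsAlgClosed.exists_pow_nat_eq ε⁻¹ (NeZero.pos q)
  refine ⟨mk q ℓ (toUnitSphere y₀ (EuclideanSpace.single j w)),
    contractsTo_of_equivariant hℓ continuous_chartWeight.isOpen_support y₀
    (g := fun y ↦ EuclideanSpace.single j (coordPhase q ε j y)) (fun y hy ↦ ?_) (fun c y ↦ ?_)
    (fun y hy ↦ lineMap_coordPhase_ne_zero hq (coordPow_mem_slitPlane_iff.2 hy))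
    fun y hy ↦ ?_⟩
  · have hsingle : Continuous fun w : ℂ ↦ EuclideanSpace.single j w :=
      (PiLp.continuous_toLp 2 _).comp (continuous_single (A := fun _ ↦ ℂ) j)
    exact (hsingle.continuousAt.comp
      (continuousAt_coordPhase (coordPow_mem_slitPlane_iff.2 hy))).continuousWithinAt
  · ext i
    obtain rfl | hi := eq_or_ne i j
    · simp [coordPhase_rotateSphere]
    · simp [hi]
  · have hpow : coordPow q ε j y ≠ 0 :=
      Complex.slitPlane_ne_zero (coordPow_mem_slitPlane_iff.2 hy)
    refine mk_toUnitSphere_single_eq (hℓ j) y₀ ?_ ((coordPhase_pow hpow).trans hw.symm)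
    rintro rfl
    rw [zero_pow (NeZero.ne q)] at hw
    exact inv_ne_zero (left_ne_zero_of_mul hpow) hw.symm

lemma isContractibleWeight_chartWeight (hq : 2 ≤ q) (hℓ : ∀ j, IsCoprime (ℓ j) (q : ℤ)) :
    IsContractibleWeight (chartWeight q ℓ ε j) where
  continuous := continuous_chartWeight
  nonneg := isQuotientMap_mk.surjective.forall.2 fun y ↦ by
    have := Complex.abs_re_le_norm (coordPow q ε j y)
    rw [chartWeight_mk]
    linarith [neg_abs_le (coordPow q ε j y).re]
  exists_contractsTo := exists_contractsTo_support_chartWeight hq hℓ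

lemma exists_chartWeight_ne_zero (l : LensSpace q k ℓ) :
    ∃ (i : Fin 2) (j : Fin k), chartWeight q ℓ ((-1) ^ (i : ℕ)) j l ≠ 0 := by
  obtain ⟨y, rfl⟩ := isQuotientMap_mk.surjective l
  by_contra! h
  refine ne_zero_of_mem_unit_sphere y (PiLp.ext fun j ↦ ?_)
  have hpos := h 0 j
  have hneg := h 1 j
  simp only [chartWeight_mk, coordPow, Fin.val_zero, Fin.val_one, pow_zero, pow_one, one_mul,
    neg_one_mul, Complex.neg_re, norm_neg] at hpos hneg
  exact eq_zero_of_pow_eq_zero (norm_eq_zero.1 (by linarith : ‖y.1 j ^ q‖ = 0))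

theorem hasCategoricalCover_prod {m : ℕ} (hm : 1 ≤ m) (hk : 1 ≤ k) (hq : 2 ≤ q)
    (hℓ : ∀ j, IsCoprime (ℓ j) (q : ℤ)) :
    HasCategoricalCover (RealSphere m × LensSpace q k ℓ) (2 * k) := by
  have := pathConnectedSpace (q := q) (ℓ := ℓ) hk
  have : PathConnectedSpace (RealSphere m) := by
    refine pathConnectedSpace_unitSphere ?_
    rw [← Module.finrank_eq_rank, finrank_euclideanSpace_fin]
    exact_mod_cast (by lia : 1 < m + 1)
  obtain ⟨e⟩ : Nonempty (RealSphere m) := inferInstance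
  have hweight := isContractibleWeight_dist_neg (-e)
  rw [neg_neg] at hweight
  refine IsContractibleWeight.hasCategoricalCover_prod (isContractibleWeight_dist_neg e) hweight
    (fun x ↦ ?_) (γ := fun s ↦ chartWeight q ℓ ((-1) ^ (finProdFinEquiv.symm s).1.val)
      (finProdFinEquiv.symm s).2) (fun s ↦ isContractibleWeight_chartWeight hq hℓ) fun l ↦ ?_
  · by_contra! h
    exact ne_neg_of_mem_unit_sphere ℝ e ((dist_eq_zero.1 h.2).symm.trans (dist_eq_zero.1 h.1))
  · obtain ⟨i, j, h⟩ := exists_chartWeight_ne_zero l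
    exact ⟨finProdFinEquiv (i, j), by simpa using h⟩

end LensSpace

/-! ### The category of the product -/

lemma HasCategoricalCover.mono {X : Type*} [TopologicalSpace X] {k k' : ℕ}
    (h : HasCategoricalCover X k) (hk : k ≤ k') : HasCategoricalCover X k' := by
  obtain ⟨U, hU, hcover, hUc⟩ := h
  refine ⟨fun i ↦ U ⟨min i k, by lia⟩, fun i ↦ hU _, ?_, fun i ↦ hUc _⟩
  refine Set.eq_univ_of_forall fun x ↦ ?_
  obtain ⟨i, hi⟩ := Set.iUnion_eq_univ_iff.1 hcover x
  refine Set.mem_iUnion.2 ⟨i.castLE (by lia), ?_⟩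
  simpa [min_eq_left i.is_le] using hi

lemma lsCat_eq_succ {X : Type*} [TopologicalSpace X] {k : ℕ} (h : HasCategoricalCover X (k + 1))
    (h' : ¬ HasCategoricalCover X k) : lsCat X = k + 1 :=
  (Nat.sInf_upward_closed_eq_succ_iff (s := {k | HasCategoricalCover X k})
    (fun _ _ hk h ↦ h.mono hk) k).2 ⟨h, h'⟩

theorem lsCat_prod_sphere_lensSpace_general {k q m : ℕ} (hk : 1 ≤ k) (hq : 2 ≤ q) (hm : 1 ≤ m)
    {ℓ : Fin k → ℤ} (hℓ : ∀ j, IsCoprime (ℓ j) (q : ℤ)) :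
    lsCat (RealSphere m × LensSpace q k ℓ) = 2 * k := by
  have : NeZero q := ⟨by lia⟩
  obtain ⟨K, rfl⟩ := Nat.exists_eq_add_of_le' hk
  exact lsCat_eq_succ (LensSpace.hasCategoricalCover_prod hm hk hq hℓ)
    (LensSpace.not_hasCategoricalCover_prod rfl hq hℓ)

/-- For odd `n = 2k-1`, `q ≥ 2` and `1 ≤ m ≤ n`, `cat (S^m × L^n_q) = n + 1`, where `S^m` is
the unit sphere in `ℝ^{m+1}`. -/
theorem lsCat_prod_sphere_lensSpace (k : ℕ) (hk : 1 ≤ k) (n : ℕ) (hn : n = 2 * k - 1)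
    (q : ℕ) (hq2 : 2 ≤ q) (m : ℕ) (hm1 : 1 ≤ m) (hmn : m ≤ n)
    (ℓ : Fin k → ℤ) (hℓ : ∀ j, IsCoprime (ℓ j) (q : ℤ)) :
    lsCat (↥(Metric.sphere (0 : EuclideanSpace ℝ (Fin (m + 1))) 1) × LensSpace q k ℓ) = n + 1 := by
  rw [lsCat_prod_sphere_lensSpace_general hk hq2 hm1 hℓ]
  lia
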